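/- Fix real κ > 0 and η > 0, and let a, b be real with 0 < a < b/2. For f > 0 let J(f) denote the number of zeros of D_f, counted with multiplicity (each zero weighted by its order of vanishing), lying in the set {z ∈ ℂ : a ≤ Re z ≤ b, Im z < 0}. Then J(f) is finite for all sufficiently small f > 0 and 0 < liminf_{f→0⁺} f·J(f) ≤ limsup_{f→0⁺} f·J(f) < ∞. -/

import Mathlib

open Real
open scoped ENNReal

/-- Taylor coefficients of the Airy function `Ai`:
`a₀ = 3^{−2/3}/Γ(2/3)`, `a₁ = −3^{−1/3}/Γ(1/3)`, `a₂ = 0`,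
`a_{k+3} = a_k/((k+3)(k+2))`. -/
noncomputable def airyCoeff : ℕ → ℂ
  | 0 => (3 : ℂ) ^ (-(2 : ℂ) / 3) / Complex.Gamma (2 / 3)
  | 1 => -((3 : ℂ) ^ (-(1 : ℂ) / 3) / Complex.Gamma (1 / 3))
  | 2 => 0
  | (k + 3) => airyCoeff k / (((k : ℂ) + 3) * ((k : ℂ) + 2))

/-- The Airy function `Ai`, as the entire function with the above Taylor
coefficients at `0`. -/
noncomputable def Ai (z : ℂ) : ℂ := ∑' k : ℕ, airyCoeff k * z ^ k

/-- `ω = e^{2πi/3}` -/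
noncomputable def ωc : ℂ := Complex.exp (2 * π * Complex.I / 3)

/-- `W = f^{1/3}·e^{−iπ/6}/(2π)` -/
noncomputable def Wf (f : ℝ) : ℂ :=
  ((f ^ ((1 : ℝ) / 3) : ℝ) : ℂ) * Complex.exp (-(π : ℂ) * Complex.I / 6) / (2 * π)

/-- `α₊(z) = Ai(−ω(z − κf)f^{−2/3})·Ai(−(z − κf)f^{−2/3})` -/
noncomputable def alphaP (κ f : ℝ) (z : ℂ) : ℂ :=
  Ai (-ωc * (z - κ * f) * ((f ^ (-(2 : ℝ) / 3) : ℝ) : ℂ)) *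
    Ai (-(z - κ * f) * ((f ^ (-(2 : ℝ) / 3) : ℝ) : ℂ))

/-- `α₋(z) = Ai(−ω(z + κf)f^{−2/3})·Ai(−(z + κf)f^{−2/3})` -/
noncomputable def alphaM (κ f : ℝ) (z : ℂ) : ℂ :=
  Ai (-ωc * (z + κ * f) * ((f ^ (-(2 : ℝ) / 3) : ℝ) : ℂ)) *
    Ai (-(z + κ * f) * ((f ^ (-(2 : ℝ) / 3) : ℝ) : ℂ))

/-- `β₊(z) = Ai(−ω(z + κf)f^{−2/3})·Ai(−(z − κf)f^{−2/3})` -/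
noncomputable def betaP (κ f : ℝ) (z : ℂ) : ℂ :=
  Ai (-ωc * (z + κ * f) * ((f ^ (-(2 : ℝ) / 3) : ℝ) : ℂ)) *
    Ai (-(z - κ * f) * ((f ^ (-(2 : ℝ) / 3) : ℝ) : ℂ))

/-- `β₋(z) = Ai(−ω(z − κf)f^{−2/3})·Ai(−(z + κf)f^{−2/3})` -/
noncomputable def betaM (κ f : ℝ) (z : ℂ) : ℂ :=
  Ai (-ωc * (z - κ * f) * ((f ^ (-(2 : ℝ) / 3) : ℝ) : ℂ)) *
    Ai (-(z + κ * f) * ((f ^ (-(2 : ℝ) / 3) : ℝ) : ℂ))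

/-- The resonance determinant `D_f` of the Stark Hamiltonian
`p² + fx + η⁻¹(δ_κ + δ_{−κ})`:
`D_f(z) = 1 + (α₊ + α₋)/(ηW) + β₊(β₋ − β₊)/(η²W²)`. -/
noncomputable def Df (κ η f : ℝ) (z : ℂ) : ℂ :=
  1 + (alphaP κ f z + alphaM κ f z) / (η * Wf f)
    + betaP κ f z * (betaM κ f z - betaP κ f z) / (η ^ 2 * (Wf f) ^ 2)

/-- The order of vanishing of `g` at `z`: the least `n` with
`(d/dz)ⁿ g(z) ≠ 0`. -/
noncomputable def vanishingOrder (g : ℂ → ℂ) (z : ℂ) : ℕ :=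
  sInf {n : ℕ | iteratedDeriv n g z ≠ 0}

/-- The number `J(f)` of zeros of `D_f`, counted with multiplicity, lying in
`{a ≤ Re z ≤ b, Im z < 0}` (the resonances below the segment `[a,b]`). -/
noncomputable def Jcount (κ η f a b : ℝ) : ℕ :=
  ∑ᶠ z ∈ {z : ℂ | a ≤ z.re ∧ z.re ≤ b ∧ z.im < 0 ∧ Df κ η f z = 0},
    vanishingOrder (Df κ η f) z

/-!
Deforming the contour of the Airy integral gives the leading asymptotics of `Ai` with an error
uniform in the argument, so that for `q` near a real `k > 0`, as `f → 0⁺`,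
`D_f(q²) ≈ A(k) + B(k) e^{4iq³/(3f)}`. Here `B` is real and `|A|² = 1 + B²`, so `|B| < |A|` and a
zero can only occur where the exponential has modulus larger than one, that is, below the real
axis. Where `B(k) ≠ 0`, each turn of the phase `4q³/(3f)` contributes one such zero, by comparison
with the exact zeros of the limit, and there are about `1/f` turns.

For the upper bound, in `Im z ≤ -M` the outgoing factor squared at `z + κf` dominates all the other
terms of `D_f`, so all zeros lie in a fixed disc around `a`. There `|D_f| ≤ C e^{K/f}`, while
`|D_f(a)|` stays away from zero, and Jensen's formula bounds the number of zeros by `C'/f`.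
-/

section Airy

open MeasureTheory Set Filter Topology

/-! ### The Laplace integral of the Airy function -/

lemma integrableOn_pow_mul_exp_neg_mul_pow (k : ℕ) {n : ℕ} (hn : 0 < n) {c : ℝ} (hc : 0 < c) :
    IntegrableOn (fun r : ℝ => r ^ k * exp (-c * r ^ n)) (Ioi 0) := by
  have hk : (-1 : ℝ) < k := by linarith [k.cast_nonneg (α := ℝ)]
  simpa only [rpow_natCast] using
    integrableOn_rpow_mul_exp_neg_mul_rpow hk (Nat.cast_pos (α := ℝ).mpr hn) hc

/-- The `k`-th moment of the density `exp (-r³/3)` on `(0, ∞)`. -/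
noncomputable def cubicMoment (k : ℕ) : ℝ :=
  ∫ r in Ioi (0 : ℝ), r ^ k * exp (-(1 / 3) * r ^ 3)

lemma cubicMoment_eq (k : ℕ) :
    cubicMoment k = 3 ^ (((k : ℝ) - 2) / 3) * Real.Gamma (((k : ℝ) + 1) / 3) := by
  have hk : (-1 : ℝ) < k := by linarith [k.cast_nonneg (α := ℝ)]
  have h := integral_rpow_mul_exp_neg_mul_rpow (p := (3 : ℕ)) (b := 1 / 3)
    (by norm_num) hk (by norm_num)
  simp only [rpow_natCast] at h
  rw [cubicMoment, h, one_div, inv_rpow zero_le_three, ← rpow_neg zero_le_three,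
    show ((k : ℝ) - 2) / 3 = -(-((k : ℝ) + 1) / (3 : ℕ)) - 1 by push_cast; ring,
    rpow_sub_one three_ne_zero]
  push_cast
  ring

lemma cubicMoment_add_three (k : ℕ) : cubicMoment (k + 3) = (k + 1) * cubicMoment k := by
  rw [cubicMoment_eq, cubicMoment_eq,
    show (((k + 3 : ℕ) : ℝ) + 1) / 3 = ((k : ℝ) + 1) / 3 + 1 by push_cast; ring,
    show (((k + 3 : ℕ) : ℝ) - 2) / 3 = ((k : ℝ) - 2) / 3 + 1 by push_cast; ring,
    Gamma_add_one (by positivity), rpow_add_one three_ne_zero]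
  ring

/-- The Laplace transform of `exp (-r³/3)`, an entire function of `w`. -/
noncomputable def cubicLaplace (w : ℂ) : ℂ :=
  ∫ r in Ioi (0 : ℝ), Complex.exp (-(r : ℂ) ^ 3 / 3 - w * r)

lemma mul_le_cube_add {A r : ℝ} (hA : 0 ≤ A) (hr : 0 ≤ r) : A * r ≤ r ^ 3 / 6 + 3 * √A ^ 3 := by
  obtain ⟨s, hs, rfl⟩ : ∃ s, 0 ≤ s ∧ A = s ^ 2 := ⟨√A, sqrt_nonneg A, (sq_sqrt hA).symm⟩
  rw [sqrt_sq hs]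
  rcases le_total r (3 * s) with h | h
  · nlinarith [pow_nonneg hr 3, mul_le_mul_of_nonneg_left h (sq_nonneg s)]
  · have hsq : s ^ 2 ≤ r ^ 2 / 6 := by nlinarith
    nlinarith [pow_nonneg hs 3, mul_le_mul_of_nonneg_right hsq hr]

lemma integrableOn_exp_mul_mul_exp_neg_cube {A : ℝ} (hA : 0 ≤ A) :
    IntegrableOn (fun r : ℝ => exp (A * r) * exp (-(1 / 3) * r ^ 3)) (Ioi 0) := by
  refine Integrable.mono'
    ((integrableOn_pow_mul_exp_neg_mul_pow 0 three_pos (c := 1 / 6) (by norm_num)).const_mul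
      (exp (3 * √A ^ 3)))
    (by fun_prop) (ae_restrict_of_forall_mem measurableSet_Ioi fun r hr => ?_)
  rw [norm_of_nonneg (by positivity), pow_zero, one_mul, ← exp_add, ← exp_add, exp_le_exp]
  linarith [mul_le_cube_add hA (mem_Ioi.1 hr).le]

lemma norm_cubicLaplace_le (w : ℂ) :
    ‖cubicLaplace w‖ ≤
      (∫ r in Ioi (0 : ℝ), r ^ 0 * exp (-(1 / 6) * r ^ 3)) * exp (3 * √‖w‖ ^ 3) := by
  rw [cubicLaplace, ← integral_mul_const]
  refine norm_integral_le_of_norm_le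
    ((integrableOn_pow_mul_exp_neg_mul_pow 0 three_pos (by norm_num)).mul_const _)
    (ae_restrict_of_forall_mem measurableSet_Ioi fun r hr => ?_)
  rw [mem_Ioi] at hr
  have hlin : -(w * r).re ≤ ‖w‖ * r := by
    simpa [abs_of_pos hr] using (neg_le_abs _).trans (Complex.abs_re_le_norm (w * r))
  have hre : (-(r : ℂ) ^ 3 / 3 - w * r).re = -r ^ 3 / 3 - (w * r).re := by
    rw [Complex.sub_re, ← Complex.ofReal_re (-r ^ 3 / 3)]
    push_cast
    rfl
  rw [Complex.norm_exp, hre, pow_zero, one_mul, ← exp_add, exp_le_exp]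
  linarith [mul_le_cube_add (norm_nonneg w) hr.le]

lemma hasSum_exp_mul_exp_neg_cube (w : ℂ) (r : ℝ) :
    HasSum (fun k : ℕ => (-w) ^ k / k.factorial * ((r ^ k * exp (-(1 / 3) * r ^ 3) : ℝ) : ℂ))
      (Complex.exp (-(r : ℂ) ^ 3 / 3 - w * r)) := by
  have h := (NormedSpace.expSeries_div_hasSum_exp (-w * r : ℂ)).mul_right
    (Complex.exp (-(1 / 3) * (r : ℂ) ^ 3))
  rw [← Complex.exp_eq_exp_ℂ, ← Complex.exp_add,
    show -w * r + -(1 / 3) * (r : ℂ) ^ 3 = -(r : ℂ) ^ 3 / 3 - w * r by ring] at h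
  refine h.congr_fun fun k => ?_
  push_cast
  rw [mul_pow]
  ring

lemma hasSum_cubicLaplace (w : ℂ) :
    HasSum (fun k : ℕ => (-w) ^ k / k.factorial * (cubicMoment k : ℂ)) (cubicLaplace w) := by
  have hexp (r : ℝ) : HasSum (fun k : ℕ => (‖w‖ * r) ^ k / k.factorial * exp (-(1 / 3) * r ^ 3))
      (exp (‖w‖ * r) * exp (-(1 / 3) * r ^ 3)) := by
    have h := (NormedSpace.expSeries_div_hasSum_exp (‖w‖ * r)).mul_right (exp (-(1 / 3) * r ^ 3))
    rwa [← exp_eq_exp_ℝ] at h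
  have key := hasSum_integral_of_dominated_convergence (μ := volume.restrict (Ioi (0 : ℝ)))
    (F := fun (k : ℕ) (r : ℝ) =>
      (-w) ^ k / (k.factorial : ℂ) * ((r ^ k * exp (-(1 / 3) * r ^ 3) : ℝ) : ℂ))
    (fun k r => (‖w‖ * r) ^ k / (k.factorial : ℝ) * exp (-(1 / 3) * r ^ 3))
    (fun k => (by fun_prop : Continuous _).aestronglyMeasurable)
    (fun k => ae_restrict_of_forall_mem measurableSet_Ioi fun r hr => ?_)
    (.of_forall fun r => (hexp r).summable) ?_
    (.of_forall fun r => hasSum_exp_mul_exp_neg_cube w r)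
  · refine key.congr_fun fun k => ?_
    rw [integral_const_mul, integral_complex_ofReal, cubicMoment]
  · rw [mem_Ioi] at hr
    rw [norm_mul, norm_div, norm_pow, norm_neg, Complex.norm_natCast, Complex.norm_real,
      norm_of_nonneg (by positivity), mul_pow]
    exact le_of_eq (by ring)
  · simp only [(hexp _).tsum_eq]
    exact integrableOn_exp_mul_mul_exp_neg_cube (norm_nonneg w)

lemma ωc_eq : ωc = -1 / 2 + (√3 / 2 : ℝ) * Complex.I := by
  have hangle : (2 * π * Complex.I / 3 : ℂ) = ((π - π / 3 : ℝ) : ℂ) * Complex.I := by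
    push_cast; ring
  rw [ωc, hangle, Complex.exp_mul_I, ← Complex.ofReal_cos, ← Complex.ofReal_sin, cos_pi_sub,
    sin_pi_sub, cos_pi_div_three, sin_pi_div_three]
  push_cast; ring

lemma ωc_pow_three : ωc ^ 3 = 1 := (Complex.isPrimitiveRoot_exp 3 three_ne_zero).pow_eq_one

lemma one_add_ωc_add_sq : 1 + ωc + ωc ^ 2 = 0 := by
  simpa [Finset.sum_range_succ, ωc] using
    (Complex.isPrimitiveRoot_exp 3 three_ne_zero).geom_sum_eq_zero (by norm_num)

lemma norm_ωc : ‖ωc‖ = 1 := Complex.norm_eq_one_of_pow_eq_one ωc_pow_three three_ne_zero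

lemma ωc_sub_sq : ωc - ωc ^ 2 = (√3 : ℝ) * Complex.I := by
  have h : ωc - ωc ^ 2 = 2 * ωc + 1 := by linear_combination -one_add_ωc_add_sq
  rw [h, ωc_eq]
  push_cast; ring

lemma Gamma_third_mul_Gamma_two_thirds :
    Real.Gamma (1 / 3) * Real.Gamma (2 / 3) = 2 * π / √3 := by
  have h := Real.Gamma_mul_Gamma_one_sub (1 / 3)
  rw [show (1 - 1 / 3 : ℝ) = 2 / 3 by norm_num, mul_one_div, sin_pi_div_three] at h
  rw [h]
  field_simp

lemma airyCoeff_zero_eq : airyCoeff 0 = ((√3 / (2 * π) * cubicMoment 0 : ℝ) : ℂ) := by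
  have hΓ : Real.Gamma (2 / 3) ≠ 0 := (Gamma_pos_of_pos (by norm_num)).ne'
  have hreal : √3 / (2 * π) * cubicMoment 0 = 3 ^ (-(2 : ℝ) / 3) / Real.Gamma (2 / 3) := by
    rw [cubicMoment_eq, eq_div_iff hΓ, Nat.cast_zero, zero_sub, zero_add, mul_assoc, mul_assoc,
      Gamma_third_mul_Gamma_two_thirds]
    field_simp
  rw [hreal, airyCoeff]
  push_cast
  rw [Complex.ofReal_cpow zero_le_three, ← Complex.Gamma_ofReal]
  push_cast
  rfl

lemma airyCoeff_one_eq : airyCoeff 1 = ((-(√3 / (2 * π) * cubicMoment 1) : ℝ) : ℂ) := by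
  have hΓ : Real.Gamma (1 / 3) ≠ 0 := (Gamma_pos_of_pos (by norm_num)).ne'
  have hreal : √3 / (2 * π) * cubicMoment 1 = 3 ^ (-(1 : ℝ) / 3) / Real.Gamma (1 / 3) := by
    rw [cubicMoment_eq, eq_div_iff hΓ, Nat.cast_one, one_add_one_eq_two,
      show (1 - 2 : ℝ) / 3 = -1 / 3 by norm_num, mul_assoc, mul_assoc, mul_comm (Real.Gamma _),
      Gamma_third_mul_Gamma_two_thirds]
    field_simp
  rw [hreal, airyCoeff]
  push_cast
  rw [Complex.ofReal_cpow zero_le_three, ← Complex.Gamma_ofReal]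
  push_cast
  rfl

lemma ωc_pow_sub_add_three (k : ℕ) :
    ωc ^ (k + 3 + 1) - (ωc ^ 2) ^ (k + 3 + 1) = ωc ^ (k + 1) - (ωc ^ 2) ^ (k + 1) := by
  linear_combination (ωc ^ (k + 1) - ωc ^ (2 * k + 2) * (ωc ^ 3 + 1)) * ωc_pow_three

lemma airyCoeff_eq_moment (k : ℕ) :
    airyCoeff k = (ωc ^ (k + 1) - (ωc ^ 2) ^ (k + 1)) / (2 * π * Complex.I) *
      (cubicMoment k / k.factorial) := by
  have hπ : (π : ℂ) ≠ 0 := Complex.ofReal_ne_zero.2 pi_ne_zero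
  induction k using Nat.strongRec with
  | ind k ih =>
    match k, ih with
    | 0, _ =>
      rw [airyCoeff_zero_eq, zero_add, pow_one, pow_one, ωc_sub_sq]
      push_cast
      field_simp
      simp
    | 1, _ =>
      have hpow : ωc ^ 2 - (ωc ^ 2) ^ 2 = -(ωc - ωc ^ 2) := by
        linear_combination -ωc * ωc_pow_three
      rw [airyCoeff_one_eq, one_add_one_eq_two, hpow, ωc_sub_sq]
      push_cast
      field_simp
      simp
    | 2, _ => rw [airyCoeff, ← pow_mul, pow_mul', ωc_pow_three]; simp
    | k + 3, ih =>
      have hk (j : ℕ) : (k : ℂ) + (j + 1 : ℕ) ≠ 0 := mod_cast Nat.succ_ne_zero (k + j)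
      have h1 := hk 0
      have h2 := hk 1
      have h3 := hk 2
      have hfac : (k.factorial : ℂ) ≠ 0 := mod_cast k.factorial_ne_zero
      have hfac_succ : ((k + 3).factorial : ℂ) = (k + 3) * ((k + 2) * ((k + 1) * k.factorial)) := by
        simp only [Nat.factorial_succ]
        push_cast
        ring
      rw [airyCoeff, ih k (by omega), ωc_pow_sub_add_three, cubicMoment_add_three, hfac_succ]
      push_cast at h1 h2 h3 ⊢
      field_simp

lemma hasSum_Ai (w : ℂ) : HasSum (fun k => airyCoeff k * w ^ k)
    ((ωc * cubicLaplace (-ωc * w) - ωc ^ 2 * cubicLaplace (-ωc ^ 2 * w)) /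
      (2 * π * Complex.I)) := by
  refine ((((hasSum_cubicLaplace (-ωc * w)).mul_left ωc).sub
    ((hasSum_cubicLaplace (-ωc ^ 2 * w)).mul_left (ωc ^ 2))).div_const _).congr_fun fun k => ?_
  rw [airyCoeff_eq_moment, neg_mul, neg_mul, neg_neg, neg_neg, mul_pow, mul_pow]
  ring

lemma Ai_eq_cubicLaplace (w : ℂ) :
    Ai w = (ωc * cubicLaplace (-ωc * w) - ωc ^ 2 * cubicLaplace (-ωc ^ 2 * w)) /
      (2 * π * Complex.I) :=
  (hasSum_Ai w).tsum_eq

lemma Ai_add_rotations (w : ℂ) : Ai w + ωc * Ai (ωc * w) + ωc ^ 2 * Ai (ωc ^ 2 * w) = 0 := by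
  have h3 := ωc_pow_three
  have h1 : -ωc ^ 2 * (ωc * w) = -w := by linear_combination -w * h3
  have h2 : -ωc * (ωc ^ 2 * w) = -w := by linear_combination -w * h3
  have h4 : -ωc ^ 2 * (ωc ^ 2 * w) = -ωc * w := by linear_combination -w * ωc * h3
  have h5 : -ωc * (ωc * w) = -ωc ^ 2 * w := by ring
  simp only [Ai_eq_cubicLaplace, h1, h2, h4, h5]
  linear_combination -(cubicLaplace (-ωc * w)) * ωc / (2 * π * Complex.I) * h3

lemma differentiable_Ai : Differentiable ℂ Ai := by
  intro w
  have hR : 0 ≤ ‖w‖ + 1 := by positivity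
  have hdiff : DifferentiableOn ℂ Ai (Metric.ball 0 (‖w‖ + 1)) := by
    refine Complex.differentiableOn_tsum_of_summable_norm
      (hasSum_Ai ((‖w‖ + 1 : ℝ) : ℂ)).summable.norm (fun k => by fun_prop) Metric.isOpen_ball
      fun k z hz => ?_
    rw [norm_mul, norm_mul, norm_pow, norm_pow, Complex.norm_real, norm_of_nonneg hR]
    gcongr
    exact (mem_ball_zero_iff.1 hz).le
  exact hdiff.differentiableAt (Metric.isOpen_ball.mem_nhds (by simp))

lemma exists_norm_Ai_le : ∃ C : ℝ, 0 ≤ C ∧ ∀ w : ℂ, ‖Ai w‖ ≤ C * exp (3 * √‖w‖ ^ 3) := by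
  refine ⟨(∫ r in Ioi (0 : ℝ), r ^ 0 * exp (-(1 / 6) * r ^ 3)) / π,
    div_nonneg (setIntegral_nonneg measurableSet_Ioi fun r hr => ?_) pi_pos.le, fun w => ?_⟩
  · have : 0 < r := hr
    positivity
  have h₁ := norm_cubicLaplace_le (-ωc * w)
  have h₂ := norm_cubicLaplace_le (-ωc ^ 2 * w)
  simp only [norm_mul, norm_neg, norm_pow, norm_ωc, one_pow, one_mul] at h₁ h₂
  have hden : ‖(2 * π * Complex.I : ℂ)‖ = 2 * π := by simp [pi_pos.le]
  rw [Ai_eq_cubicLaplace, norm_div, hden, div_mul_eq_mul_div,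
    div_le_div_iff₀ (by positivity) pi_pos]
  have hsub := norm_sub_le (ωc * cubicLaplace (-ωc * w)) (ωc ^ 2 * cubicLaplace (-ωc ^ 2 * w))
  simp only [norm_mul, norm_pow, norm_ωc, one_pow, one_mul] at hsub
  nlinarith [pi_pos]

/-! ### Deformation to the steepest descent contour -/

/-- The integrand `exp (t³/3 - p²t)` of the contour integral for `Ai (p²)`. -/
noncomputable def airyKernel (p : ℝ) (t : ℂ) : ℂ := Complex.exp (t ^ 3 / 3 - p ^ 2 * t)

/-- Direction of the `s`-th ray of the deformation, running from `e^{iπ/3} = -ω²` at `s = 0`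
to `i` at `s = 1`. -/
noncomputable def rayDir (s : ℝ) : ℂ := (1 - s) * (-ωc ^ 2) + s * Complex.I

/-- The point at parameter `r` of the `s`-th ray, which issues from `s * p`; at `s = 1` the ray
is the vertical half-line through the saddle point `p`. -/
noncomputable def rayPoint (p s r : ℝ) : ℂ := s * p + rayDir s * r

/-- The integral of the Airy kernel along the `s`-th ray. -/
noncomputable def rayIntegral (p s : ℝ) : ℂ :=
  ∫ r in Ioi (0 : ℝ), rayDir s * airyKernel p (rayPoint p s r)

lemma hasDerivAt_airyKernel (p : ℝ) (t : ℂ) :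
    HasDerivAt (airyKernel p) ((t ^ 2 - p ^ 2) * airyKernel p t) t := by
  have h : HasDerivAt (fun t : ℂ => t ^ 3 / 3 - p ^ 2 * t) (t ^ 2 - p ^ 2) t := by
    refine (((hasDerivAt_pow 3 t).div_const 3).sub
      ((hasDerivAt_id t).const_mul ((p : ℂ) ^ 2))).congr_deriv ?_
    push_cast; ring
  exact h.cexp.congr_deriv (mul_comm _ _)

@[fun_prop]
lemma continuous_airyKernel (p : ℝ) : Continuous (airyKernel p) := by
  unfold airyKernel; fun_prop

lemma rayDir_eq (s : ℝ) : rayDir s = ⟨(1 - s) / 2, (1 - s) * (√3 / 2) + s⟩ := by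
  have h : rayDir s = ((1 - s : ℝ) : ℂ) * (1 + ωc) + (s : ℝ) * Complex.I := by
    rw [rayDir]
    push_cast
    linear_combination (s - 1) * one_add_ωc_add_sq
  have hω : 1 + ωc = ⟨1 / 2, √3 / 2⟩ := by rw [ωc_eq]; apply Complex.ext <;> norm_num
  rw [h, hω]
  apply Complex.ext <;> simp [div_eq_mul_inv]

lemma norm_neg_ωc_sq : ‖-ωc ^ 2‖ = 1 := by rw [norm_neg, norm_pow, norm_ωc, one_pow]

lemma norm_rayDir_le {s : ℝ} (hs : s ∈ Icc (0 : ℝ) 1) : ‖rayDir s‖ ≤ 1 := by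
  have h0 : ‖(1 - s : ℂ)‖ = 1 - s := by
    rw [← Complex.ofReal_one, ← Complex.ofReal_sub, Complex.norm_of_nonneg (by linarith [hs.2])]
  calc ‖rayDir s‖ ≤ ‖(1 - s : ℂ) * (-ωc ^ 2)‖ + ‖(s : ℂ) * Complex.I‖ := norm_add_le _ _
    _ = 1 := by
      rw [norm_mul, norm_mul, norm_neg_ωc_sq, Complex.norm_I, h0, Complex.norm_of_nonneg hs.1]
      ring

lemma re_airyKernel_exponent (p s r : ℝ) :
    (rayPoint p s r ^ 3 / 3 - p ^ 2 * rayPoint p s r).re =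
      (s ^ 3 / 3 - s) * p ^ 3 + (s ^ 2 - 1) * p ^ 2 * r * (rayDir s).re
        + s * p * r ^ 2 * ((rayDir s).re ^ 2 - (rayDir s).im ^ 2)
        + r ^ 3 / 3 * ((rayDir s).re * ((rayDir s).re ^ 2 - 3 * (rayDir s).im ^ 2)) := by
  have h : rayPoint p s r = ⟨s * p + (rayDir s).re * r, (rayDir s).im * r⟩ := by
    apply Complex.ext <;> simp [rayPoint]
  have h3 : (rayPoint p s r ^ 3 / 3).re = (rayPoint p s r ^ 3).re / 3 := by simp
  have h2 : ((p : ℂ) ^ 2 * rayPoint p s r).re = p ^ 2 * (rayPoint p s r).re := by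
    rw [← Complex.ofReal_pow, Complex.re_ofReal_mul]
  rw [Complex.sub_re, h3, h2, h]
  simp only [pow_succ, pow_zero, one_mul, Complex.mul_re, Complex.mul_im]
  ring

lemma re_airyKernel_exponent_le {p s r : ℝ} (hp : 0 ≤ p) (hs : s ∈ Icc (0 : ℝ) 1) (hr : 0 ≤ r) :
    (rayPoint p s r ^ 3 / 3 - p ^ 2 * rayPoint p s r).re ≤ 1 / 3 - min (p / 2) (1 / 3) * r ^ 2 := by
  obtain ⟨hs0, hs1⟩ := hs
  have hre : (rayDir s).re = (1 - s) / 2 := by rw [rayDir_eq]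
  have hsqrt : √3 ^ 2 = 3 := sq_sqrt zero_le_three
  have him : 3 / 4 ≤ (rayDir s).im ^ 2 := by
    have h1 : √3 / 2 ≤ (rayDir s).im := by
      have : √3 ≤ 2 := by rw [sqrt_le_left zero_le_two]; norm_num
      rw [rayDir_eq]; dsimp only; nlinarith
    nlinarith [sqrt_nonneg 3]
  set u := (rayDir s).re
  set v := (rayDir s).im
  have hu0 : 0 ≤ u := by rw [hre]; linarith
  have hu1 : u ^ 2 ≤ 1 / 4 := by nlinarith
  have hs2 : s ^ 2 ≤ 1 := pow_le_one₀ hs0 hs1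
  have t1 : (s ^ 3 / 3 - s) * p ^ 3 ≤ 0 :=
    mul_nonpos_of_nonpos_of_nonneg (by nlinarith) (by positivity)
  have t2 : (s ^ 2 - 1) * p ^ 2 * r * u ≤ 0 := by
    rw [mul_assoc, mul_assoc]
    exact mul_nonpos_of_nonpos_of_nonneg (by linarith) (by positivity)
  have t3 : s * p * r ^ 2 * (u ^ 2 - v ^ 2) ≤ s * p * r ^ 2 * (-1 / 2) := by
    gcongr; linarith
  have t4 : r ^ 3 / 3 * (u * (u ^ 2 - 3 * v ^ 2)) ≤ r ^ 3 / 3 * (u * (-2)) := by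
    gcongr; linarith
  have hcube : r ^ 2 - 1 ≤ r ^ 3 := by nlinarith [mul_nonneg hr (sq_nonneg (r - 1))]
  have hmin1 : s * r ^ 2 * min (p / 2) (1 / 3) ≤ s * r ^ 2 * (p / 2) := by
    gcongr; exact min_le_left _ _
  have hmin2 : (1 - s) * r ^ 2 * min (p / 2) (1 / 3) ≤ (1 - s) * r ^ 2 * (1 / 3) := by
    have : 0 ≤ 1 - s := by linarith
    gcongr; exact min_le_right _ _
  rw [re_airyKernel_exponent]
  nlinarith [mul_le_mul_of_nonneg_left hcube (sub_nonneg.2 hs1)]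

lemma norm_airyKernel_le {p s r : ℝ} (hp : 0 ≤ p) (hs : s ∈ Icc (0 : ℝ) 1) (hr : 0 ≤ r) :
    ‖airyKernel p (rayPoint p s r)‖ ≤ exp (1 / 3) * exp (-min (p / 2) (1 / 3) * r ^ 2) := by
  rw [airyKernel, Complex.norm_exp, ← exp_add, exp_le_exp]
  linarith [re_airyKernel_exponent_le hp hs hr]

/-- The velocity `∂ₛ (rayPoint p s r)`. -/
noncomputable def rayVelocity (p r : ℝ) : ℂ := p + (Complex.I + ωc ^ 2) * r

/-- The common value of `∂ₛ (rayDir s * K (rayPoint p s r))` and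
`∂ᵣ (rayVelocity p r * K (rayPoint p s r))`, where `K` is the Airy kernel. -/
noncomputable def rayFlux (p s r : ℝ) : ℂ :=
  (Complex.I + ωc ^ 2 + rayVelocity p r * rayDir s * (rayPoint p s r ^ 2 - p ^ 2)) *
    airyKernel p (rayPoint p s r)

lemma hasDerivAt_rayDir (s : ℝ) : HasDerivAt rayDir (Complex.I + ωc ^ 2) s := by
  have hs : HasDerivAt (fun s : ℝ => (s : ℂ)) 1 s := Complex.ofRealCLM.hasDerivAt
  refine (((hs.const_sub 1).mul_const (-ωc ^ 2)).add (hs.mul_const Complex.I)).congr_deriv ?_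
  ring

lemma hasDerivAt_ray_param (p s r : ℝ) :
    HasDerivAt (fun s => rayDir s * airyKernel p (rayPoint p s r)) (rayFlux p s r) s := by
  have hs : HasDerivAt (fun s : ℝ => (s : ℂ)) 1 s := Complex.ofRealCLM.hasDerivAt
  have hpt : HasDerivAt (fun s => rayPoint p s r) (rayVelocity p r) s :=
    ((hs.mul_const (p : ℂ)).add ((hasDerivAt_rayDir s).mul_const (r : ℂ))).congr_deriv
      (by rw [rayVelocity, one_mul])
  refine ((hasDerivAt_rayDir s).mul ((hasDerivAt_airyKernel p _).comp s hpt)).congr_deriv ?_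
  simp only [rayFlux, Function.comp_apply]
  ring

lemma hasDerivAt_ray_length (p s r : ℝ) :
    HasDerivAt (fun r => rayVelocity p r * airyKernel p (rayPoint p s r)) (rayFlux p s r) r := by
  have hr : HasDerivAt (fun r : ℝ => (r : ℂ)) 1 r := Complex.ofRealCLM.hasDerivAt
  have hpt : HasDerivAt (rayPoint p s) (rayDir s) r :=
    ((hr.const_mul (rayDir s)).const_add _).congr_deriv (mul_one _)
  have hvel : HasDerivAt (rayVelocity p) (Complex.I + ωc ^ 2) r :=
    ((hr.const_mul (Complex.I + ωc ^ 2)).const_add _).congr_deriv (mul_one _)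
  refine (hvel.mul ((hasDerivAt_airyKernel p _).comp r hpt)).congr_deriv ?_
  simp only [rayFlux, Function.comp_apply]
  ring

lemma norm_I_add_ωc_sq_le : ‖Complex.I + ωc ^ 2‖ ≤ 2 := by
  refine (norm_add_le _ _).trans_eq ?_
  rw [Complex.norm_I, norm_pow, norm_ωc]
  norm_num

lemma norm_rayVelocity_le {p r : ℝ} (hp : 0 ≤ p) (hr : 0 ≤ r) :
    ‖rayVelocity p r‖ ≤ p + 2 * r := by
  refine (norm_add_le _ _).trans ?_
  rw [norm_mul, Complex.norm_of_nonneg hp, Complex.norm_of_nonneg hr]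
  gcongr
  exact norm_I_add_ωc_sq_le

lemma norm_rayPoint_le {p s r : ℝ} (hp : 0 ≤ p) (hs : s ∈ Icc (0 : ℝ) 1) (hr : 0 ≤ r) :
    ‖rayPoint p s r‖ ≤ p + r := by
  refine (norm_add_le _ _).trans ?_
  rw [norm_mul, norm_mul, Complex.norm_of_nonneg hp, Complex.norm_of_nonneg hr,
    Complex.norm_of_nonneg hs.1]
  gcongr
  · exact mul_le_of_le_one_left hp hs.2
  · exact mul_le_of_le_one_left hr (norm_rayDir_le hs)

lemma norm_rayFlux_le {p s r : ℝ} (hp : 0 ≤ p) (hs : s ∈ Icc (0 : ℝ) 1) (hr : 0 ≤ r) :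
    ‖rayFlux p s r‖ ≤ (2 + 2 * (p + 2 * r) ^ 3) *
      (exp (1 / 3) * exp (-min (p / 2) (1 / 3) * r ^ 2)) := by
  have hquad : ‖rayPoint p s r ^ 2 - p ^ 2‖ ≤ 2 * (p + 2 * r) ^ 2 := by
    refine (norm_sub_le _ _).trans ?_
    rw [norm_pow, norm_pow, Complex.norm_of_nonneg hp]
    nlinarith [pow_le_pow_left₀ (norm_nonneg _) (norm_rayPoint_le hp hs hr) 2, mul_nonneg hp hr]
  have hprod : ‖rayVelocity p r * rayDir s * (rayPoint p s r ^ 2 - p ^ 2)‖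
      ≤ 2 * (p + 2 * r) ^ 3 :=
    calc _ = ‖rayVelocity p r‖ * ‖rayDir s‖ * ‖rayPoint p s r ^ 2 - p ^ 2‖ := by
          rw [norm_mul, norm_mul]
      _ ≤ (p + 2 * r) * 1 * (2 * (p + 2 * r) ^ 2) := by
          gcongr
          · exact norm_rayVelocity_le hp hr
          · exact norm_rayDir_le hs
      _ = 2 * (p + 2 * r) ^ 3 := by ring
  rw [rayFlux, norm_mul]
  gcongr
  · exact (norm_add_le _ _).trans (add_le_add norm_I_add_ωc_sq_le hprod)
  · exact norm_airyKernel_le hp hs hr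

lemma integrableOn_rayFlux_bound {p : ℝ} (hp : 0 < p) :
    IntegrableOn (fun r => (2 + 2 * (p + 2 * r) ^ 3) *
      (exp (1 / 3) * exp (-min (p / 2) (1 / 3) * r ^ 2))) (Ioi 0) := by
  have hδ : 0 < min (p / 2) (1 / 3 : ℝ) := lt_min (by positivity) (by norm_num)
  have hint (k : ℕ) := integrableOn_pow_mul_exp_neg_mul_pow k two_pos hδ
  refine IntegrableOn.congr_fun ((((((hint 0).const_mul (2 + 2 * p ^ 3)).add
    ((hint 1).const_mul (12 * p ^ 2))).add ((hint 2).const_mul (24 * p))).add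
    ((hint 3).const_mul 16)).const_mul (exp (1 / 3))) (fun r _ => ?_) measurableSet_Ioi
  simp only [Pi.add_apply]
  ring

@[fun_prop]
lemma continuous_rayDir : Continuous rayDir := by unfold rayDir; fun_prop

@[fun_prop]
lemma continuous_rayPoint (p s : ℝ) : Continuous (rayPoint p s) := by unfold rayPoint; fun_prop

@[fun_prop]
lemma continuous_rayVelocity (p : ℝ) : Continuous (rayVelocity p) := by
  unfold rayVelocity; fun_prop

lemma integrableOn_of_norm_le_rayFlux_bound {p : ℝ} (hp : 0 < p) {g : ℝ → ℂ} (hg : Continuous g)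
    (h : ∀ r, 0 ≤ r → ‖g r‖ ≤ (2 + 2 * (p + 2 * r) ^ 3) *
      (exp (1 / 3) * exp (-min (p / 2) (1 / 3) * r ^ 2))) : IntegrableOn g (Ioi 0) :=
  (integrableOn_rayFlux_bound hp).mono' hg.aestronglyMeasurable
    (ae_restrict_of_forall_mem measurableSet_Ioi fun r hr => h r (mem_Ioi.1 hr).le)

lemma norm_ray_integrand_le {p s r : ℝ} (hp : 0 ≤ p) (hs : s ∈ Icc (0 : ℝ) 1) (hr : 0 ≤ r) :
    ‖rayDir s * airyKernel p (rayPoint p s r)‖ ≤ (2 + 2 * (p + 2 * r) ^ 3) *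
      (exp (1 / 3) * exp (-min (p / 2) (1 / 3) * r ^ 2)) := by
  rw [norm_mul]
  gcongr
  · have : 0 ≤ (p + 2 * r) ^ 3 := by positivity
    linarith [norm_rayDir_le hs]
  · exact norm_airyKernel_le hp hs hr

lemma integral_rayFlux {p s : ℝ} (hp : 0 < p) (hs : s ∈ Icc (0 : ℝ) 1) :
    ∫ r in Ioi (0 : ℝ), rayFlux p s r = -(p * airyKernel p (s * p)) := by
  have hflux : IntegrableOn (rayFlux p s) (Ioi 0) :=
    integrableOn_of_norm_le_rayFlux_bound hp (by unfold rayFlux; fun_prop)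
      fun r hr => norm_rayFlux_le hp.le hs hr
  have hprim : IntegrableOn (fun r => rayVelocity p r * airyKernel p (rayPoint p s r)) (Ioi 0) := by
    refine integrableOn_of_norm_le_rayFlux_bound hp (by fun_prop) fun r hr => ?_
    have hx : 0 ≤ p + 2 * r := by positivity
    rw [norm_mul]
    gcongr
    · nlinarith [norm_rayVelocity_le hp.le hr, mul_nonneg hx (sq_nonneg (p + 2 * r - 1)),
        sq_nonneg (p + 2 * r - 1), mul_nonneg hx hx]
    · exact norm_airyKernel_le hp.le hs hr
  have hderiv (r : ℝ) := hasDerivAt_ray_length p s r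
  have hlim := tendsto_zero_of_hasDerivAt_of_integrableOn_Ioi (fun r _ => hderiv r) hflux hprim
  rw [integral_Ioi_of_hasDerivAt_of_tendsto' (fun r _ => hderiv r) hflux hlim]
  simp [rayVelocity, rayPoint]

lemma hasDerivAt_rayIntegral {p s : ℝ} (hp : 0 < p) (hs : s ∈ Ioo (0 : ℝ) 1) :
    HasDerivAt (rayIntegral p) (-(p * airyKernel p (s * p))) s := by
  have hs' := Ioo_subset_Icc_self hs
  rw [← integral_rayFlux hp hs']
  refine (hasDerivAt_integral_of_dominated_loc_of_deriv_le (isOpen_Ioo.mem_nhds hs)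
    (.of_forall fun s => ?_) ?_ ?_
    (ae_restrict_of_forall_mem measurableSet_Ioi fun r hr s hs => ?_)
    (integrableOn_rayFlux_bound hp)
    (.of_forall fun r s _ => hasDerivAt_ray_param p s r)).2
  · exact (by fun_prop : Continuous _).aestronglyMeasurable
  · exact integrableOn_of_norm_le_rayFlux_bound hp (by fun_prop)
      fun r hr => norm_ray_integrand_le hp.le hs' hr
  · exact (by unfold rayFlux; fun_prop : Continuous (rayFlux p s)).aestronglyMeasurable
  · exact norm_rayFlux_le hp.le (Ioo_subset_Icc_self hs) (mem_Ioi.1 hr).le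

lemma continuousOn_rayIntegral {p : ℝ} (hp : 0 < p) :
    ContinuousOn (rayIntegral p) (Icc 0 1) :=
  continuousOn_of_dominated
    (fun s _ => (by fun_prop : Continuous _).aestronglyMeasurable)
    (fun s hs => ae_restrict_of_forall_mem measurableSet_Ioi fun r hr =>
      norm_ray_integrand_le hp.le hs (mem_Ioi.1 hr).le)
    (integrableOn_rayFlux_bound hp)
    (.of_forall fun r s _ => (hasDerivAt_ray_param p s r).continuousAt.continuousWithinAt)

lemma airyKernel_real_im (p x : ℝ) : (airyKernel p x).im = 0 := by
  rw [airyKernel]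
  norm_cast

-- The rays start on the real axis, where the kernel is real, so moving them only changes the
-- real part of the integral.
lemma im_rayIntegral_zero_eq_one {p : ℝ} (hp : 0 < p) :
    (rayIntegral p 0).im = (rayIntegral p 1).im := by
  obtain ⟨s, -, hslope⟩ := exists_hasDerivAt_eq_slope (fun s => (rayIntegral p s).im)
    (fun s => (-(p * airyKernel p (s * p))).im) zero_lt_one
    (Complex.continuous_im.comp_continuousOn (continuousOn_rayIntegral hp))
    fun s hs => Complex.imCLM.hasFDerivAt.comp_hasDerivAt s (hasDerivAt_rayIntegral hp hs)
  rw [← Complex.ofReal_mul, Complex.neg_im, Complex.im_ofReal_mul, airyKernel_real_im] at hslope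
  linarith

lemma rayIntegral_zero (p : ℝ) : rayIntegral p 0 = -ωc ^ 2 * cubicLaplace (-ωc ^ 2 * p ^ 2) := by
  rw [rayIntegral, cubicLaplace, ← integral_const_mul]
  congr 1 with r
  have hexp : rayPoint p 0 r ^ 3 / 3 - p ^ 2 * rayPoint p 0 r
      = -(r : ℂ) ^ 3 / 3 - -ωc ^ 2 * p ^ 2 * r := by
    rw [rayPoint, rayDir]
    push_cast
    linear_combination (-(r : ℂ) ^ 3 / 3) * (ωc ^ 3 + 1) * ωc_pow_three
  rw [airyKernel, hexp, rayDir]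
  simp

lemma cubicLaplace_conj (w : ℂ) :
    cubicLaplace ((starRingEnd ℂ) w) = (starRingEnd ℂ) (cubicLaplace w) := by
  rw [cubicLaplace, cubicLaplace, ← integral_conj]
  congr 1 with r
  simp only [← Complex.exp_conj, map_sub, map_div₀, map_neg, map_pow, map_mul, map_ofNat,
    Complex.conj_ofReal]

lemma conj_ωc : (starRingEnd ℂ) ωc = ωc ^ 2 := by
  have h : (starRingEnd ℂ) ωc = -1 - ωc := by
    simp only [ωc_eq, map_add, map_mul, map_div₀, map_neg, map_one, map_ofNat,
      Complex.conj_ofReal, Complex.conj_I]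
    ring
  rw [h]
  linear_combination -one_add_ωc_add_sq

lemma Ai_ofReal_sq_eq_im (p : ℝ) : Ai ((p : ℂ) ^ 2) = ((rayIntegral p 0).im / π : ℝ) := by
  have hconj : (starRingEnd ℂ) (rayIntegral p 0) = -ωc * cubicLaplace (-ωc * p ^ 2) := by
    have h4 : (ωc ^ 2) ^ 2 = ωc := by linear_combination ωc * ωc_pow_three
    rw [rayIntegral_zero, map_mul, ← cubicLaplace_conj]
    simp only [map_mul, map_neg, map_pow, conj_ωc, Complex.conj_ofReal, h4]
  have hπ : (π : ℂ) ≠ 0 := Complex.ofReal_ne_zero.2 pi_ne_zero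
  have him := Complex.sub_conj (rayIntegral p 0)
  rw [hconj, rayIntegral_zero] at him
  push_cast at him
  rw [Ai_eq_cubicLaplace, rayIntegral_zero, Complex.ofReal_div, div_eq_div_iff (by simp) hπ]
  linear_combination π * him

/-- The normalized Airy integral `∫₀^∞ exp (-p r²) cos (r³/3) dr`, which is
`π exp (2p³/3) Ai (p²)` on the right half-plane. -/
noncomputable def airyGauss (p : ℂ) : ℂ :=
  ∫ r in Ioi (0 : ℝ), Complex.exp (-p * (r : ℂ) ^ 2) * (cos (r ^ 3 / 3) : ℝ)

lemma rayIntegral_one_integrand_im (p r : ℝ) :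
    (rayDir 1 * airyKernel p (rayPoint p 1 r)).im =
      exp (-2 * p ^ 3 / 3) * (exp (-p * r ^ 2) * cos (r ^ 3 / 3)) := by
  have hexp : rayPoint p 1 r ^ 3 / 3 - p ^ 2 * rayPoint p 1 r
      = ((-2 * p ^ 3 / 3 - p * r ^ 2 : ℝ) : ℂ) + ((-(r ^ 3 / 3) : ℝ) : ℂ) * Complex.I := by
    rw [rayPoint, rayDir]
    push_cast
    linear_combination ((p : ℂ) * r ^ 2 + Complex.I * r ^ 3 / 3) * Complex.I_sq
  have hdir : rayDir 1 = Complex.I := by simp [rayDir]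
  rw [hdir, airyKernel, hexp, Complex.I_mul_im, Complex.exp_add, ← Complex.ofReal_exp,
    Complex.re_ofReal_mul, Complex.exp_ofReal_mul_I_re, cos_neg, ← mul_assoc, ← exp_add]
  ring_nf

lemma Ai_ofReal_sq {p : ℝ} (hp : 0 < p) :
    Ai ((p : ℂ) ^ 2) = Complex.exp (-2 * p ^ 3 / 3) / π * airyGauss p := by
  have hint : IntegrableOn (fun r => rayDir 1 * airyKernel p (rayPoint p 1 r)) (Ioi 0) :=
    integrableOn_of_norm_le_rayFlux_bound hp (by fun_prop)
      fun r hr => norm_ray_integrand_le hp.le (right_mem_Icc.2 zero_le_one) hr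
  have him : (rayIntegral p 1).im =
      exp (-2 * p ^ 3 / 3) * ∫ r in Ioi (0 : ℝ), exp (-p * r ^ 2) * cos (r ^ 3 / 3) := by
    rw [← integral_const_mul]
    exact (integral_im hint).symm.trans (by simp only [RCLike.im_to_complex,
      rayIntegral_one_integrand_im])
  have hgauss : airyGauss p = (∫ r in Ioi (0 : ℝ), exp (-p * r ^ 2) * cos (r ^ 3 / 3) : ℝ) := by
    rw [airyGauss, ← integral_complex_ofReal]
    push_cast
    rfl
  rw [Ai_ofReal_sq_eq_im, im_rayIntegral_zero_eq_one hp, him, hgauss]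
  push_cast
  ring

lemma norm_exp_neg_mul_sq (p : ℂ) (r : ℝ) :
    ‖Complex.exp (-p * (r : ℂ) ^ 2)‖ = exp (-p.re * r ^ 2) := by
  rw [Complex.norm_exp, ← Complex.ofReal_pow, Complex.re_mul_ofReal, Complex.neg_re]

lemma integrableOn_exp_neg_mul_sq_mul {p : ℂ} (hp : 0 < p.re) {h : ℝ → ℂ} (hc : Continuous h)
    (hh : ∀ r, ‖h r‖ ≤ 1) :
    IntegrableOn (fun r : ℝ => Complex.exp (-p * (r : ℂ) ^ 2) * h r) (Ioi 0) := by
  refine (integrableOn_pow_mul_exp_neg_mul_pow 0 two_pos hp).mono'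
    (by fun_prop : Continuous _).aestronglyMeasurable (.of_forall fun r => ?_)
  rw [norm_mul, norm_exp_neg_mul_sq, pow_zero, one_mul]
  exact mul_le_of_le_one_right (exp_nonneg _) (hh r)

lemma norm_ofReal_cos_le_one (x : ℝ) : ‖((cos x : ℝ) : ℂ)‖ ≤ 1 := by
  rw [Complex.norm_real]
  exact abs_cos_le_one x

lemma differentiableOn_airyGauss : DifferentiableOn ℂ airyGauss {p : ℂ | 0 < p.re} := by
  intro p hp
  rw [mem_ofPred_eq] at hp
  have hnhds : {q : ℂ | p.re / 2 < q.re} ∈ 𝓝 p :=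
    (isOpen_lt continuous_const Complex.continuous_re).mem_nhds (half_lt_self hp)
  refine (hasDerivAt_integral_of_dominated_loc_of_deriv_le
    (F := fun (q : ℂ) (r : ℝ) => Complex.exp (-q * (r : ℂ) ^ 2) * ((cos (r ^ 3 / 3) : ℝ) : ℂ))
    (F' := fun (q : ℂ) (r : ℝ) =>
      Complex.exp (-q * (r : ℂ) ^ 2) * (-1 * (r : ℂ) ^ 2) * ((cos (r ^ 3 / 3) : ℝ) : ℂ))
    hnhds (.of_forall fun q => (by fun_prop : Continuous _).aestronglyMeasurable)
    (integrableOn_exp_neg_mul_sq_mul hp (by fun_prop) fun r => norm_ofReal_cos_le_one _)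
    (by fun_prop : Continuous _).aestronglyMeasurable (.of_forall fun r q hq => ?_)
    (integrableOn_pow_mul_exp_neg_mul_pow 2 two_pos (half_pos hp))
    (.of_forall fun r q _ =>
      ((hasDerivAt_neg q).mul_const ((r : ℂ) ^ 2)).cexp.mul_const _)).2.differentiableAt
      |>.differentiableWithinAt
  have hsq : ‖-1 * (r : ℂ) ^ 2‖ = r ^ 2 := by simp
  rw [norm_mul, norm_mul, norm_exp_neg_mul_sq, hsq, mul_comm (r ^ 2)]
  refine (mul_le_of_le_one_right (by positivity) (norm_ofReal_cos_le_one _)).trans ?_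
  gcongr
  exact hq.le

lemma Ai_sq_eq_airyGauss {p : ℂ} (hp : 0 < p.re) :
    Ai (p ^ 2) = Complex.exp (-2 * p ^ 3 / 3) / π * airyGauss p := by
  have hopen : IsOpen {p : ℂ | 0 < p.re} := isOpen_lt continuous_const Complex.continuous_re
  have hleft : AnalyticOnNhd ℂ (fun p : ℂ => Ai (p ^ 2)) {p : ℂ | 0 < p.re} :=
    (differentiable_Ai.comp (by fun_prop)).differentiableOn.analyticOnNhd hopen
  have hright : AnalyticOnNhd ℂ (fun p : ℂ => Complex.exp (-2 * p ^ 3 / 3) / π * airyGauss p)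
      {p : ℂ | 0 < p.re} :=
    (DifferentiableOn.mul (by fun_prop) differentiableOn_airyGauss).analyticOnNhd hopen
  have hconn : IsPreconnected {p : ℂ | 0 < p.re} := (convex_halfSpace_re_gt 0).isPreconnected
  have hlim : Tendsto (fun x : ℝ => (x : ℂ)) (𝓝[≠] 1) (𝓝[≠] 1) :=
    Complex.continuous_ofReal.continuousAt.continuousWithinAt.tendsto_nhdsWithin
      fun x hx => by simpa using hx
  refine hleft.eqOn_of_preconnected_of_frequently_eq hright hconn (z₀ := 1) (by simp)
    (hlim.frequently (Eventually.frequently ?_)) hp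
  filter_upwards [nhdsWithin_le_nhds (lt_mem_nhds one_pos)] with x hx using Ai_ofReal_sq hx

/-! ### Uniform asymptotics in sectors -/

lemma integral_cube_mul_exp_neg_mul_sq {c : ℝ} (hc : 0 < c) :
    ∫ r in Ioi (0 : ℝ), r ^ 3 * exp (-c * r ^ 2) = 1 / (2 * c ^ 2) := by
  have h := integral_rpow_mul_exp_neg_mul_rpow (p := 2) (q := 3) (by norm_num) (by norm_num) hc
  simp only [rpow_ofNat] at h
  rw [h, show -((3 : ℝ) + 1) / 2 = -2 by norm_num, show ((3 : ℝ) + 1) / 2 = (1 : ℕ) + 1 by norm_num,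
    Gamma_nat_eq_factorial, rpow_neg hc.le, rpow_ofNat, Nat.factorial_one, Nat.cast_one]
  ring

lemma norm_airyGauss_sub_le {p : ℂ} (hp : 0 < p.re) :
    ‖airyGauss p - (π / p) ^ (1 / 2 : ℂ) / 2‖ ≤ 1 / (6 * p.re ^ 2) := by
  have hgauss : ∫ r in Ioi (0 : ℝ), Complex.exp (-p * (r : ℂ) ^ 2) * 1
      = (π / p) ^ (1 / 2 : ℂ) / 2 := by
    simpa only [mul_one] using integral_gaussian_complex_Ioi hp
  have hbound : ∫ r in Ioi (0 : ℝ), 1 / 3 * (r ^ 3 * exp (-p.re * r ^ 2)) = 1 / (6 * p.re ^ 2) := by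
    rw [integral_const_mul, integral_cube_mul_exp_neg_mul_sq hp]
    ring
  rw [← hgauss, ← hbound, airyGauss, ← integral_sub
    (integrableOn_exp_neg_mul_sq_mul hp (by fun_prop) fun r => norm_ofReal_cos_le_one _)
    (integrableOn_exp_neg_mul_sq_mul hp continuous_const fun r => norm_one.le)]
  refine norm_integral_le_of_norm_le
    ((integrableOn_pow_mul_exp_neg_mul_pow 3 two_pos hp).const_mul _)
    (ae_restrict_of_forall_mem measurableSet_Ioi fun r hr => ?_)
  have hcos : |cos (r ^ 3 / 3) - 1| ≤ r ^ 3 / 3 := by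
    have hr3 : 0 ≤ r ^ 3 / 3 := by
      rw [mem_Ioi] at hr
      positivity
    have h := abs_cos_sub_cos_le (r ^ 3 / 3) 0
    rwa [cos_zero, sub_zero, abs_of_nonneg hr3] at h
  rw [← mul_sub, norm_mul, norm_exp_neg_mul_sq, ← Complex.ofReal_one, ← Complex.ofReal_sub,
    Complex.norm_real, norm_eq_abs]
  exact (mul_le_mul_of_nonneg_left hcos (exp_nonneg _)).trans_eq (by ring)

/-- The relative error of the leading term `exp (-2p³/3) / (2 √(π p))` of `Ai (p²)`. -/
noncomputable def airyRelError (p : ℂ) : ℂ := 2 * airyGauss p / (π / p) ^ (1 / 2 : ℂ) - 1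

lemma pi_div_cpow_half_ne_zero {p : ℂ} (hp : p ≠ 0) : (π / p : ℂ) ^ (1 / 2 : ℂ) ≠ 0 := by
  simp [Complex.cpow_eq_zero_iff, hp, pi_ne_zero]

lemma Ai_sq_eq_mul_one_add {p : ℂ} (hp : 0 < p.re) :
    Ai (p ^ 2) =
      Complex.exp (-2 * p ^ 3 / 3) / π * ((π / p) ^ (1 / 2 : ℂ) / 2 * (1 + airyRelError p)) := by
  have hp0 : p ≠ 0 := by rintro rfl; simp at hp
  have hs := pi_div_cpow_half_ne_zero hp0
  rw [Ai_sq_eq_airyGauss hp, airyRelError]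
  field_simp
  ring

lemma norm_airyRelError_le {p : ℂ} (hp : 0 < p.re) (hsector : ‖p‖ ≤ 4 * p.re) :
    ‖airyRelError p‖ ≤ 6 * √(1 / ‖p‖ ^ 3) := by
  have hp0 : p ≠ 0 := by rintro rfl; simp at hp
  have hpn : 0 < ‖p‖ := norm_pos_iff.2 hp0
  have hs := pi_div_cpow_half_ne_zero hp0
  have happrox := norm_airyGauss_sub_le hp
  have hsq : ((π / p : ℂ) ^ (1 / 2 : ℂ)) ^ 2 = π / p := by simp
  rw [airyRelError]
  generalize (π / p : ℂ) ^ (1 / 2 : ℂ) = s at *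
  have hnorm : ‖s‖ = √(π / ‖p‖) := by
    rw [← sqrt_sq (norm_nonneg s), ← norm_pow, hsq, norm_div, Complex.norm_of_nonneg pi_pos.le]
  have hscale : √(1 / ‖p‖ ^ 3) * ‖s‖ = √π / ‖p‖ ^ 2 := by
    rw [hnorm, ← sqrt_mul (by positivity),
      show 1 / ‖p‖ ^ 3 * (π / ‖p‖) = π / (‖p‖ ^ 2) ^ 2 by field_simp,
      sqrt_div pi_pos.le, sqrt_sq (by positivity)]
  have hre : 1 / (6 * p.re ^ 2) ≤ 16 / (6 * ‖p‖ ^ 2) := by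
    rw [div_le_div_iff₀ (by positivity) (by positivity)]
    nlinarith
  have hpi : 1 ≤ √π := one_le_sqrt.2 (by linarith [pi_gt_three])
  rw [show 2 * airyGauss p / s - 1 = 2 * (airyGauss p - s / 2) / s by field_simp, norm_div,
    norm_mul, Complex.norm_two, div_le_iff₀ (norm_pos_iff.2 hs), mul_assoc, hscale]
  calc 2 * ‖airyGauss p - s / 2‖ ≤ 2 * (16 / (6 * ‖p‖ ^ 2)) := by linarith
    _ = 16 / 3 / ‖p‖ ^ 2 := by ring
    _ ≤ 6 * √π / ‖p‖ ^ 2 := by gcongr; linarith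
    _ = 6 * (√π / ‖p‖ ^ 2) := by ring

lemma mul_cpow_of_re_pos {x y : ℂ} (hx : 0 < x.re) (hy : 0 < y.re) (c : ℂ) :
    (x * y) ^ c = x ^ c * y ^ c := by
  have hx0 : x ≠ 0 := by rintro rfl; simp at hx
  have hy0 : y ≠ 0 := by rintro rfl; simp at hy
  have hargx := abs_lt.1 (Complex.abs_arg_lt_pi_div_two_iff.2 (Or.inl hx))
  have hargy := abs_lt.1 (Complex.abs_arg_lt_pi_div_two_iff.2 (Or.inl hy))
  rw [Complex.cpow_def_of_ne_zero (mul_ne_zero hx0 hy0), Complex.cpow_def_of_ne_zero hx0,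
    Complex.cpow_def_of_ne_zero hy0, ← Complex.exp_add, ← add_mul,
    Complex.log_mul hx0 hy0 ⟨by linarith, by linarith⟩]

lemma pi_div_re_pos {p : ℂ} (hp : 0 < p.re) : 0 < (π / p : ℂ).re := by
  have hn : 0 < Complex.normSq p := Complex.normSq_pos.2 (by rintro rfl; simp at hp)
  rw [div_eq_mul_inv, Complex.re_ofReal_mul, Complex.inv_re]
  positivity

lemma pi_div_cpow_half_mul {p q r : ℂ} (hp : 0 < p.re) (hq : 0 < q.re) (hr : 0 < r.re)
    (h : p * q = r ^ 2) : (π / p : ℂ) ^ (1 / 2 : ℂ) * (π / q : ℂ) ^ (1 / 2 : ℂ) = π / r := by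
  rw [← mul_cpow_of_re_pos (pi_div_re_pos hp) (pi_div_re_pos hq), div_mul_div_comm, h, ← sq,
    ← div_pow, one_div, Complex.sq_cpow_two_inv (pi_div_re_pos hr)]

/-! ### The determinant in terms of outgoing and incoming waves -/

/-- The primitive twelfth root of unity `e^{iπ/6}`; the waves below are values of `Ai` on the rays
through `e^{∓iπ/6}`, since `-ω = (e^{-iπ/6})²` and `-ω² = (e^{iπ/6})²`. -/
noncomputable def ζc : ℂ := Complex.exp (π * Complex.I / 6)

lemma ζc_ne_zero : ζc ≠ 0 := Complex.exp_ne_zero _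

lemma ζc_eq : ζc = ⟨√3 / 2, 1 / 2⟩ := by
  rw [ζc, show (π : ℂ) * Complex.I / 6 = ((π / 6 : ℝ) : ℂ) * Complex.I by push_cast; ring]
  apply Complex.ext
  · rw [Complex.exp_ofReal_mul_I_re, cos_pi_div_six]
  · rw [Complex.exp_ofReal_mul_I_im, sin_pi_div_six]

lemma inv_ζc_eq : ζc⁻¹ = ⟨√3 / 2, -1 / 2⟩ := by
  rw [ζc, ← Complex.exp_neg,
    show -((π : ℂ) * Complex.I / 6) = ((-(π / 6) : ℝ) : ℂ) * Complex.I by push_cast; ring]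
  apply Complex.ext
  · rw [Complex.exp_ofReal_mul_I_re, cos_neg, cos_pi_div_six]
  · rw [Complex.exp_ofReal_mul_I_im, sin_neg, sin_pi_div_six, neg_div]

lemma ζc_pow_three : ζc ^ 3 = Complex.I := by
  rw [ζc, ← Complex.exp_nat_mul,
    show ((3 : ℕ) : ℂ) * (π * Complex.I / 6) = π / 2 * Complex.I by push_cast; ring,
    Complex.exp_pi_div_two_mul_I]

lemma ζc_sq : ζc ^ 2 = -ωc ^ 2 := by
  rw [ζc, ωc, ← Complex.exp_nat_mul, ← Complex.exp_nat_mul, ← neg_one_mul,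
    ← Complex.exp_neg_pi_mul_I, ← Complex.exp_add]
  push_cast
  ring_nf

lemma inv_ζc_sq : ζc⁻¹ ^ 2 = -ωc := by
  rw [inv_pow, ζc_sq]
  exact inv_eq_of_mul_eq_one_right (by linear_combination ωc_pow_three)

lemma Wf_eq (f : ℝ) : Wf f = ((f ^ ((1 : ℝ) / 3) : ℝ) : ℂ) * ζc⁻¹ / (2 * π) := by
  rw [Wf, ζc, ← Complex.exp_neg]
  ring_nf

/-- The wave `Ai (-ω z f^{-2/3})`, which is proportional to `exp (2iz^{3/2}/(3f))` to leading
order. -/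
noncomputable def outWave (f : ℝ) (z : ℂ) : ℂ := Ai (-ωc * z * ((f ^ (-(2 : ℝ) / 3) : ℝ) : ℂ))

/-- The wave `Ai (-ω² z f^{-2/3})`, which is proportional to `exp (-2iz^{3/2}/(3f))` to leading
order. -/
noncomputable def inWave (f : ℝ) (z : ℂ) : ℂ := Ai (-ωc ^ 2 * z * ((f ^ (-(2 : ℝ) / 3) : ℝ) : ℂ))

/-- The square of the outgoing wave, normalized by the Wronskian. -/
noncomputable def outSq (f : ℝ) (z : ℂ) : ℂ := outWave f z ^ 2 / Wf f

/-- The product of the outgoing and the incoming wave, normalized by the Wronskian. -/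
noncomputable def outIn (f : ℝ) (z : ℂ) : ℂ := outWave f z * inWave f z / Wf f

/-- The square of the incoming wave, normalized by the Wronskian. -/
noncomputable def inSq (f : ℝ) (z : ℂ) : ℂ := inWave f z ^ 2 / Wf f

lemma Ai_neg_eq_waves (f : ℝ) (z : ℂ) :
    Ai (-z * ((f ^ (-(2 : ℝ) / 3) : ℝ) : ℂ)) = -ωc * outWave f z - ωc ^ 2 * inWave f z := by
  have h := Ai_add_rotations (-z * ((f ^ (-(2 : ℝ) / 3) : ℝ) : ℂ))
  rw [outWave, inWave]
  ring_nf at h ⊢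
  linear_combination h

/-- `D_f(z)` as a polynomial in the normalized wave products at `z - κf` (index `1`) and at
`z + κf` (index `2`), obtained by eliminating `Ai (-(z ∓ κf) f^{-2/3})`. -/
noncomputable def detPoly (η S₁ P₁ T₁ S₂ P₂ : ℂ) : ℂ :=
  1 - ωc ^ 2 * (P₁ + P₂) / η + ωc * (P₁ * P₂ - S₂ * T₁) / η ^ 2
    - ωc * (S₁ + S₂) / η + (S₁ * P₂ - S₂ * P₁) / η ^ 2

lemma Df_eq_detPoly (κ η f : ℝ) (z : ℂ) :
    Df κ η f z = detPoly η (outSq f (z - κ * f)) (outIn f (z - κ * f)) (inSq f (z - κ * f))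
      (outSq f (z + κ * f)) (outIn f (z + κ * f)) := by
  rw [Df, alphaP, alphaM, betaP, betaM, Ai_neg_eq_waves, Ai_neg_eq_waves, ← outWave, ← outWave,
    detPoly, outSq, outIn, inSq, outSq, outIn]
  generalize outWave f (z - κ * f) = u₁
  generalize outWave f (z + κ * f) = u₂
  generalize inWave f (z - κ * f) = v₁
  generalize inWave f (z + κ * f) = v₂
  have hbeta : u₂ * (-ωc * u₁ - ωc ^ 2 * v₁) *
      (u₁ * (-ωc * u₂ - ωc ^ 2 * v₂) - u₂ * (-ωc * u₁ - ωc ^ 2 * v₁))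
        = u₁ * u₂ * (u₁ * v₂ - u₂ * v₁) + ωc * (u₂ * v₁) * (u₁ * v₂ - u₂ * v₁) := by
    linear_combination u₂ * (u₁ * v₂ - u₂ * v₁) * (u₁ + ωc * v₁) * ωc_pow_three
  rw [hbeta]
  ring

/-! ### Asymptotics of the wave products -/

/-- The sector `|arg q| ≤ π/4`, in which the expansions of both waves at `q²` hold. -/
def wkbSector : Set ℂ := {q | 0 < q.re ∧ |q.im| ≤ q.re}

/-- The ratio `exp (4iq³/(3f))` of the outgoing to the incoming wave at `q²`. -/
noncomputable def wkbPhase (f : ℝ) (q : ℂ) : ℂ := Complex.exp (4 / 3 * Complex.I * q ^ 3 / f)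

/-- The relative error of the leading term of the outgoing wave at `q²`. -/
noncomputable def outError (f : ℝ) (q : ℂ) : ℂ :=
  airyRelError (ζc⁻¹ * q / ((f ^ ((1 : ℝ) / 3) : ℝ) : ℂ))

/-- The relative error of the leading term of the incoming wave at `q²`. -/
noncomputable def inError (f : ℝ) (q : ℂ) : ℂ :=
  airyRelError (ζc * q / ((f ^ ((1 : ℝ) / 3) : ℝ) : ℂ))

lemma ne_zero_of_mem_wkbSector {q : ℂ} (hq : q ∈ wkbSector) : q ≠ 0 := by
  rintro rfl
  exact lt_irrefl _ hq.1

lemma wkbPhase_ne_zero (f : ℝ) (q : ℂ) : wkbPhase f q ≠ 0 := Complex.exp_ne_zero _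

lemma norm_le_of_mem_wkbSector {q : ℂ} (hq : q ∈ wkbSector) : ‖q‖ ≤ 1.42 * q.re := by
  obtain ⟨hre, him⟩ := hq
  rw [Complex.norm_eq_sqrt_sq_add_sq]
  refine sqrt_le_iff.2 ⟨by positivity, ?_⟩
  nlinarith [sq_le_sq.2 (him.trans (le_abs_self _))]

lemma div_ofReal_mul_sector {ξ q : ℂ} (hξre : ξ.re = √3 / 2) (hξim : |ξ.im| = 1 / 2)
    (hq : q ∈ wkbSector) {g : ℝ} (hg : 0 < g) :
    0 < (ξ * q / g).re ∧ ‖ξ * q / g‖ ≤ 4 * (ξ * q / g).re := by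
  have hsqrt : (1.73 : ℝ) ≤ √3 := le_sqrt_of_sq_le (by norm_num)
  have him : |ξ.im * q.im| ≤ 1 / 2 * q.re := by
    rw [abs_mul, hξim]
    exact mul_le_mul_of_nonneg_left hq.2 (by norm_num)
  have hlow : 0.365 * q.re ≤ (ξ * q).re := by
    rw [Complex.mul_re, hξre]
    nlinarith [(abs_le.1 him).2, hq.1]
  have hξ : ‖ξ‖ = 1 := by
    rw [Complex.norm_eq_sqrt_sq_add_sq, hξre, ← sq_abs ξ.im, hξim, div_pow, sq_sqrt zero_le_three]
    norm_num
  rw [Complex.div_ofReal_re, norm_div, norm_mul, hξ, one_mul, Complex.norm_of_nonneg hg.le,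
    ← mul_div_assoc, div_le_div_iff_of_pos_right hg]
  exact ⟨div_pos (by linarith [hq.1]) hg, by linarith [norm_le_of_mem_wkbSector hq, hq.1]⟩

lemma outPoint_sector {f : ℝ} (hf : 0 < f) {q : ℂ} (hq : q ∈ wkbSector) :
    0 < (ζc⁻¹ * q / ((f ^ ((1 : ℝ) / 3) : ℝ) : ℂ)).re ∧
      ‖ζc⁻¹ * q / ((f ^ ((1 : ℝ) / 3) : ℝ) : ℂ)‖ ≤
        4 * (ζc⁻¹ * q / ((f ^ ((1 : ℝ) / 3) : ℝ) : ℂ)).re :=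
  div_ofReal_mul_sector (by rw [inv_ζc_eq]) (by rw [inv_ζc_eq]; norm_num [abs_of_neg]) hq
    (by positivity)

lemma inPoint_sector {f : ℝ} (hf : 0 < f) {q : ℂ} (hq : q ∈ wkbSector) :
    0 < (ζc * q / ((f ^ ((1 : ℝ) / 3) : ℝ) : ℂ)).re ∧
      ‖ζc * q / ((f ^ ((1 : ℝ) / 3) : ℝ) : ℂ)‖ ≤
        4 * (ζc * q / ((f ^ ((1 : ℝ) / 3) : ℝ) : ℂ)).re :=
  div_ofReal_mul_sector (by rw [ζc_eq]) (by rw [ζc_eq]; norm_num) hq (by positivity)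

lemma rpow_third_pow_three {f : ℝ} (hf : 0 ≤ f) : (f ^ ((1 : ℝ) / 3)) ^ 3 = f := by
  rw [← rpow_natCast, ← rpow_mul hf]
  norm_num

lemma rpow_neg_two_thirds {f : ℝ} (hf : 0 ≤ f) :
    f ^ (-(2 : ℝ) / 3) = 1 / (f ^ ((1 : ℝ) / 3)) ^ 2 := by
  rw [← rpow_natCast, ← rpow_mul hf, one_div, ← rpow_neg hf]
  norm_num

lemma norm_airyRelError_div_le {f : ℝ} (hf : 0 < f) {ξ q : ℂ} (hξ : ‖ξ‖ = 1)
    (h : 0 < (ξ * q / ((f ^ ((1 : ℝ) / 3) : ℝ) : ℂ)).re ∧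
      ‖ξ * q / ((f ^ ((1 : ℝ) / 3) : ℝ) : ℂ)‖ ≤ 4 * (ξ * q / ((f ^ ((1 : ℝ) / 3) : ℝ) : ℂ)).re) :
    ‖airyRelError (ξ * q / ((f ^ ((1 : ℝ) / 3) : ℝ) : ℂ))‖ ≤ 6 * √(f / ‖q‖ ^ 3) := by
  refine (norm_airyRelError_le h.1 h.2).trans_eq ?_
  rw [norm_div, norm_mul, hξ, one_mul, Complex.norm_of_nonneg (by positivity), div_pow,
    rpow_third_pow_three hf.le, one_div_div]

lemma norm_ζc : ‖ζc‖ = 1 :=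
  Complex.norm_eq_one_of_pow_eq_one (n := 12)
    (by linear_combination (ζc ^ 9 + ζc ^ 6 * Complex.I - ζc ^ 3 - Complex.I) * ζc_pow_three
      + (ζc ^ 6 - 1) * Complex.I_sq) (by norm_num)

lemma norm_outError_le {f : ℝ} (hf : 0 < f) {q : ℂ} (hq : q ∈ wkbSector) :
    ‖outError f q‖ ≤ 6 * √(f / ‖q‖ ^ 3) :=
  norm_airyRelError_div_le hf (by rw [norm_inv, norm_ζc, inv_one]) (outPoint_sector hf hq)

lemma norm_inError_le {f : ℝ} (hf : 0 < f) {q : ℂ} (hq : q ∈ wkbSector) :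
    ‖inError f q‖ ≤ 6 * √(f / ‖q‖ ^ 3) :=
  norm_airyRelError_div_le hf norm_ζc (inPoint_sector hf hq)

lemma Ai_rotated_sq_div_eq {f : ℝ} (hf : 0 < f) {ξ q : ℂ}
    (hp : 0 < (ξ * q / ((f ^ ((1 : ℝ) / 3) : ℝ) : ℂ)).re) :
    Ai (ξ ^ 2 * q ^ 2 * ((f ^ (-(2 : ℝ) / 3) : ℝ) : ℂ)) =
      Complex.exp (-2 / 3 * ξ ^ 3 * q ^ 3 / f) / π *
        ((π / (ξ * q / ((f ^ ((1 : ℝ) / 3) : ℝ) : ℂ))) ^ (1 / 2 : ℂ) / 2 *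
          (1 + airyRelError (ξ * q / ((f ^ ((1 : ℝ) / 3) : ℝ) : ℂ)))) := by
  have hcube : (f : ℂ) = ((f ^ ((1 : ℝ) / 3) : ℝ) : ℂ) ^ 3 := by
    exact_mod_cast (rpow_third_pow_three hf.le).symm
  have hexp : -2 / 3 * ξ ^ 3 * q ^ 3 / f
      = -2 * (ξ * q / ((f ^ ((1 : ℝ) / 3) : ℝ) : ℂ)) ^ 3 / 3 := by
    rw [div_pow, ← hcube]
    ring
  rw [hexp, ← Ai_sq_eq_mul_one_add hp, rpow_neg_two_thirds hf.le]
  push_cast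
  ring_nf

lemma outWave_sq_eq {f : ℝ} (hf : 0 < f) {q : ℂ} (hq : q ∈ wkbSector) :
    outWave f (q ^ 2) = Complex.exp (2 / 3 * Complex.I * q ^ 3 / f) / π *
      ((π / (ζc⁻¹ * q / ((f ^ ((1 : ℝ) / 3) : ℝ) : ℂ))) ^ (1 / 2 : ℂ) / 2 *
        (1 + outError f q)) := by
  rw [outWave, ← inv_ζc_sq, Ai_rotated_sq_div_eq hf (outPoint_sector hf hq).1, inv_pow,
    ζc_pow_three, Complex.inv_I, outError]
  ring_nf

lemma inWave_sq_eq {f : ℝ} (hf : 0 < f) {q : ℂ} (hq : q ∈ wkbSector) :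
    inWave f (q ^ 2) = Complex.exp (-(2 / 3 * Complex.I * q ^ 3 / f)) / π *
      ((π / (ζc * q / ((f ^ ((1 : ℝ) / 3) : ℝ) : ℂ))) ^ (1 / 2 : ℂ) / 2 * (1 + inError f q)) := by
  rw [inWave, ← ζc_sq, Ai_rotated_sq_div_eq hf (inPoint_sector hf hq).1, ζc_pow_three, inError]
  ring_nf

lemma cpow_half_sq (x : ℂ) : (x ^ (1 / 2 : ℂ)) ^ 2 = x := by simp

lemma ofReal_rpow_third_ne_zero {f : ℝ} (hf : 0 < f) : ((f ^ ((1 : ℝ) / 3) : ℝ) : ℂ) ≠ 0 :=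
  Complex.ofReal_ne_zero.2 (by positivity)

lemma outSq_sq {f : ℝ} (hf : 0 < f) {q : ℂ} (hq : q ∈ wkbSector) :
    outSq f (q ^ 2) = ζc ^ 2 / (2 * q) * wkbPhase f q * (1 + outError f q) ^ 2 := by
  have hg := ofReal_rpow_third_ne_zero hf
  have hq0 := ne_zero_of_mem_wkbSector hq
  have hπ : (π : ℂ) ≠ 0 := Complex.ofReal_ne_zero.2 pi_ne_zero
  have hζ := ζc_ne_zero
  have hphase : wkbPhase f q = Complex.exp (2 / 3 * Complex.I * q ^ 3 / f) ^ 2 := by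
    rw [wkbPhase, ← Complex.exp_nat_mul]
    push_cast
    ring_nf
  rw [outSq, outWave_sq_eq hf hq, Wf_eq, hphase, mul_pow, mul_pow, div_pow, div_pow, cpow_half_sq]
  field_simp

lemma inSq_sq {f : ℝ} (hf : 0 < f) {q : ℂ} (hq : q ∈ wkbSector) :
    inSq f (q ^ 2) = 1 / (2 * q) * (wkbPhase f q)⁻¹ * (1 + inError f q) ^ 2 := by
  have hg := ofReal_rpow_third_ne_zero hf
  have hq0 := ne_zero_of_mem_wkbSector hq
  have hπ : (π : ℂ) ≠ 0 := Complex.ofReal_ne_zero.2 pi_ne_zero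
  have hζ := ζc_ne_zero
  have hphase : (wkbPhase f q)⁻¹ = Complex.exp (-(2 / 3 * Complex.I * q ^ 3 / f)) ^ 2 := by
    rw [wkbPhase, ← Complex.exp_nat_mul, ← Complex.exp_neg]
    push_cast
    ring_nf
  rw [inSq, inWave_sq_eq hf hq, Wf_eq, hphase, mul_pow, mul_pow, div_pow, div_pow, cpow_half_sq]
  field_simp

lemma outIn_sq {f : ℝ} (hf : 0 < f) {q : ℂ} (hq : q ∈ wkbSector) :
    outIn f (q ^ 2) = ζc / (2 * q) * ((1 + outError f q) * (1 + inError f q)) := by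
  have hg := ofReal_rpow_third_ne_zero hf
  have hg0 : 0 < f ^ ((1 : ℝ) / 3) := by positivity
  have hq0 := ne_zero_of_mem_wkbSector hq
  have hπ : (π : ℂ) ≠ 0 := Complex.ofReal_ne_zero.2 pi_ne_zero
  have hζ := ζc_ne_zero
  have hroot := pi_div_cpow_half_mul (outPoint_sector hf hq).1 (inPoint_sector hf hq).1
    (r := q / ((f ^ ((1 : ℝ) / 3) : ℝ) : ℂ)) (by rw [Complex.div_ofReal_re]; exact div_pos hq.1 hg0)
    (by field_simp)
  rw [outIn, outWave_sq_eq hf hq, inWave_sq_eq hf hq, Wf_eq, Complex.exp_neg]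
  have hE := Complex.exp_ne_zero (2 / 3 * Complex.I * q ^ 3 / f)
  generalize Complex.exp (2 / 3 * Complex.I * q ^ 3 / f) = E at *
  generalize (π / (ζc⁻¹ * q / ((f ^ ((1 : ℝ) / 3) : ℝ) : ℂ))) ^ (1 / 2 : ℂ) = X at *
  generalize (π / (ζc * q / ((f ^ ((1 : ℝ) / 3) : ℝ) : ℂ))) ^ (1 / 2 : ℂ) = Y at *
  calc E / π * (X / 2 * (1 + outError f q)) * (E⁻¹ / π * (Y / 2 * (1 + inError f q)))
        / (((f ^ ((1 : ℝ) / 3) : ℝ) : ℂ) * ζc⁻¹ / (2 * π))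
      = X * Y * ζc / (2 * π * ((f ^ ((1 : ℝ) / 3) : ℝ) : ℂ)) *
          ((1 + outError f q) * (1 + inError f q)) := by field_simp
    _ = ζc / (2 * q) * ((1 + outError f q) * (1 + inError f q)) := by rw [hroot]; field_simp

/-! ### The limit of the determinant near the positive half-line -/

section Limits

variable {ι : Type*} {l : Filter ι} {f : ι → ℝ} {q : ι → ℂ} {k : ℝ}

lemma eventually_mem_wkbSector (hk : 0 < k) (hq : Tendsto q l (𝓝 (k : ℂ))) :
    ∀ᶠ i in l, q i ∈ wkbSector := by
  have hre : Tendsto (fun i => (q i).re) l (𝓝 k) := (Complex.continuous_re.tendsto _).comp hq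
  have him : Tendsto (fun i => |(q i).im|) l (𝓝 0) :=
    ((Complex.continuous_im.abs.tendsto' (k : ℂ) 0 (by simp))).comp hq
  filter_upwards [hre.eventually (lt_mem_nhds hk), him.eventually_lt hre hk] with i hpos hlt
    using ⟨hpos, hlt.le⟩

lemma tendsto_six_mul_sqrt_zero (hk : 0 < k) (hf : Tendsto f l (𝓝 0))
    (hq : Tendsto q l (𝓝 (k : ℂ))) : Tendsto (fun i => 6 * √(f i / ‖q i‖ ^ 3)) l (𝓝 0) := by
  have h : Tendsto (fun i => f i / ‖q i‖ ^ 3) l (𝓝 (0 / ‖(k : ℂ)‖ ^ 3)) :=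
    hf.div (hq.norm.pow 3) (by simp [hk.ne'])
  simpa only [zero_div, sqrt_zero, mul_zero] using h.sqrt.const_mul 6

lemma tendsto_div_two_mul (hk : 0 < k) (hq : Tendsto q l (𝓝 (k : ℂ))) (c : ℂ) :
    Tendsto (fun i => c / (2 * q i)) l (𝓝 (c / (2 * k))) :=
  tendsto_const_nhds.div (hq.const_mul 2) (by simp [hk.ne'])

lemma tendsto_outError (hk : 0 < k) (hf : Tendsto f l (𝓝[>] 0))
    (hq : Tendsto q l (𝓝 (k : ℂ))) : Tendsto (fun i => outError (f i) (q i)) l (𝓝 0) :=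
  squeeze_zero_norm'
    (by filter_upwards [hf.eventually self_mem_nhdsWithin, eventually_mem_wkbSector hk hq]
      with i hfi hqi using norm_outError_le hfi hqi)
    (tendsto_six_mul_sqrt_zero hk (hf.mono_right nhdsWithin_le_nhds) hq)

lemma tendsto_inError (hk : 0 < k) (hf : Tendsto f l (𝓝[>] 0))
    (hq : Tendsto q l (𝓝 (k : ℂ))) : Tendsto (fun i => inError (f i) (q i)) l (𝓝 0) :=
  squeeze_zero_norm'
    (by filter_upwards [hf.eventually self_mem_nhdsWithin, eventually_mem_wkbSector hk hq]
      with i hfi hqi using norm_inError_le hfi hqi)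
    (tendsto_six_mul_sqrt_zero hk (hf.mono_right nhdsWithin_le_nhds) hq)

lemma tendsto_outSq_div_wkbPhase (hk : 0 < k) (hf : Tendsto f l (𝓝[>] 0))
    (hq : Tendsto q l (𝓝 (k : ℂ))) :
    Tendsto (fun i => outSq (f i) (q i ^ 2) / wkbPhase (f i) (q i)) l (𝓝 (ζc ^ 2 / (2 * k))) := by
  have h := (tendsto_div_two_mul hk hq (ζc ^ 2)).mul
    (((tendsto_outError hk hf hq).const_add 1).pow 2)
  rw [add_zero, one_pow, mul_one] at h
  refine h.congr' ?_
  filter_upwards [hf.eventually self_mem_nhdsWithin, eventually_mem_wkbSector hk hq] with i hfi hqi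
  rw [outSq_sq hfi hqi]
  field_simp [wkbPhase_ne_zero (f i) (q i), ne_zero_of_mem_wkbSector hqi]

lemma tendsto_outIn (hk : 0 < k) (hf : Tendsto f l (𝓝[>] 0))
    (hq : Tendsto q l (𝓝 (k : ℂ))) :
    Tendsto (fun i => outIn (f i) (q i ^ 2)) l (𝓝 (ζc / (2 * k))) := by
  have h := (tendsto_div_two_mul hk hq ζc).mul
    (((tendsto_outError hk hf hq).const_add 1).mul ((tendsto_inError hk hf hq).const_add 1))
  rw [add_zero, one_mul, mul_one] at h
  refine h.congr' ?_
  filter_upwards [hf.eventually self_mem_nhdsWithin, eventually_mem_wkbSector hk hq] with i hfi hqi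
    using (outIn_sq hfi hqi).symm

lemma tendsto_inSq_mul_wkbPhase (hk : 0 < k) (hf : Tendsto f l (𝓝[>] 0))
    (hq : Tendsto q l (𝓝 (k : ℂ))) :
    Tendsto (fun i => inSq (f i) (q i ^ 2) * wkbPhase (f i) (q i)) l (𝓝 (1 / (2 * k))) := by
  have h := (tendsto_div_two_mul hk hq 1).mul
    (((tendsto_inError hk hf hq).const_add 1).pow 2)
  rw [add_zero, one_pow, mul_one] at h
  refine h.congr' ?_
  filter_upwards [hf.eventually self_mem_nhdsWithin, eventually_mem_wkbSector hk hq] with i hfi hqi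
  rw [inSq_sq hfi hqi]
  field_simp [wkbPhase_ne_zero (f i) (q i), ne_zero_of_mem_wkbSector hqi]

/-- The square root in the right half-plane of the shifted energy `q ^ 2 + c * f`. -/
noncomputable def shiftedRoot (c f : ℝ) (q : ℂ) : ℂ := (q ^ 2 + c * f) ^ (1 / 2 : ℂ)

lemma shiftedRoot_sq (c f : ℝ) (q : ℂ) : shiftedRoot c f q ^ 2 = q ^ 2 + c * f := cpow_half_sq _

lemma tendsto_shiftedRoot (hk : 0 < k) (hf : Tendsto f l (𝓝 0))
    (hq : Tendsto q l (𝓝 (k : ℂ))) (c : ℝ) :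
    Tendsto (fun i => shiftedRoot c (f i) (q i)) l (𝓝 (k : ℂ)) := by
  have hf' : Tendsto (fun i => (f i : ℂ)) l (𝓝 0) :=
    (Complex.continuous_ofReal.tendsto' 0 0 Complex.ofReal_zero).comp hf
  have hsq : Tendsto (fun i => q i ^ 2 + c * f i) l (𝓝 ((k : ℂ) ^ 2)) := by
    simpa only [mul_zero, add_zero] using (hq.pow 2).add (hf'.const_mul (c : ℂ))
  have hslit : (k : ℂ) ^ 2 ∈ Complex.slitPlane := by
    exact_mod_cast Complex.ofReal_mem_slitPlane.2 (pow_pos hk 2)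
  have hroot : ((k : ℂ) ^ 2) ^ (1 / 2 : ℂ) = k := by
    rw [one_div]
    exact Complex.sq_cpow_two_inv (by simpa using hk)
  have hlim := hsq.cpow (tendsto_const_nhds (x := (1 / 2 : ℂ))) hslit
  rwa [hroot] at hlim

lemma wkbPhase_div_wkbPhase {c f : ℝ} {q q₁ : ℂ} (hf : f ≠ 0) (hsq : q₁ ^ 2 = q ^ 2 + c * f)
    (hne : q₁ + q ≠ 0) :
    wkbPhase f q₁ / wkbPhase f q =
      Complex.exp (4 / 3 * Complex.I * (c * (q₁ ^ 2 + q₁ * q + q ^ 2) / (q₁ + q))) := by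
  have hf' : (f : ℂ) ≠ 0 := Complex.ofReal_ne_zero.2 hf
  rw [wkbPhase, wkbPhase, ← Complex.exp_sub]
  congr 1
  field_simp
  linear_combination (q₁ ^ 2 + q₁ * q + q ^ 2) * hsq

lemma tendsto_wkbPhase_ratio (hk : 0 < k) (hf : Tendsto f l (𝓝[>] 0))
    (hq : Tendsto q l (𝓝 (k : ℂ))) (c : ℝ) :
    Tendsto (fun i => wkbPhase (f i) (shiftedRoot c (f i) (q i)) / wkbPhase (f i) (q i)) l
      (𝓝 (Complex.exp (2 * Complex.I * c * k))) := by
  have hk' : (k : ℂ) ≠ 0 := Complex.ofReal_ne_zero.2 hk.ne'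
  have hroot := tendsto_shiftedRoot hk (hf.mono_right nhdsWithin_le_nhds) hq c
  have hsum : (k : ℂ) + k ≠ 0 := by simp [hk']
  have hexponent := (((((hroot.pow 2).add (hroot.mul hq)).add (hq.pow 2)).const_mul (c : ℂ)).div
    (hroot.add hq) hsum).const_mul (4 / 3 * Complex.I)
  have hval : 4 / 3 * Complex.I * (c * ((k : ℂ) ^ 2 + k * k + k ^ 2) / (k + k)) =
      2 * Complex.I * c * k := by
    rw [← two_mul]
    field_simp
    ring
  rw [hval] at hexponent
  refine ((Complex.continuous_exp.tendsto _).comp hexponent).congr' ?_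
  filter_upwards [hf.eventually self_mem_nhdsWithin, (hroot.add hq).eventually_ne hsum]
    with i hfi hne
  exact (wkbPhase_div_wkbPhase (ne_of_gt hfi) (shiftedRoot_sq c (f i) (q i)) hne).symm

lemma tendsto_outSq_shifted (hk : 0 < k) (hf : Tendsto f l (𝓝[>] 0))
    (hq : Tendsto q l (𝓝 (k : ℂ))) (c : ℝ) :
    Tendsto (fun i => outSq (f i) (q i ^ 2 + c * f i) / wkbPhase (f i) (q i)) l
      (𝓝 (ζc ^ 2 / (2 * k) * Complex.exp (2 * Complex.I * c * k))) := by
  have hroot := tendsto_shiftedRoot hk (hf.mono_right nhdsWithin_le_nhds) hq c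
  refine ((tendsto_outSq_div_wkbPhase hk hf hroot).mul
    (tendsto_wkbPhase_ratio hk hf hq c)).congr fun i => ?_
  rw [div_mul_div_cancel₀ (wkbPhase_ne_zero _ _), shiftedRoot_sq]

lemma tendsto_inSq_shifted (hk : 0 < k) (hf : Tendsto f l (𝓝[>] 0))
    (hq : Tendsto q l (𝓝 (k : ℂ))) (c : ℝ) :
    Tendsto (fun i => inSq (f i) (q i ^ 2 + c * f i) * wkbPhase (f i) (q i)) l
      (𝓝 (1 / (2 * k) / Complex.exp (2 * Complex.I * c * k))) := by
  have hroot := tendsto_shiftedRoot hk (hf.mono_right nhdsWithin_le_nhds) hq c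
  refine ((tendsto_inSq_mul_wkbPhase hk hf hroot).div
    (tendsto_wkbPhase_ratio hk hf hq c) (Complex.exp_ne_zero _)).congr fun i => ?_
  have hne := wkbPhase_ne_zero (f i) (shiftedRoot c (f i) (q i))
  rw [Pi.div_apply, shiftedRoot_sq]
  field_simp

lemma tendsto_outIn_shifted (hk : 0 < k) (hf : Tendsto f l (𝓝[>] 0))
    (hq : Tendsto q l (𝓝 (k : ℂ))) (c : ℝ) :
    Tendsto (fun i => outIn (f i) (q i ^ 2 + c * f i)) l (𝓝 (ζc / (2 * k))) :=
  (tendsto_outIn hk hf (tendsto_shiftedRoot hk (hf.mono_right nhdsWithin_le_nhds) hq c)).congr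
    fun i => by rw [shiftedRoot_sq]

end Limits

/-- The part of `D_f(q²)` that does not oscillate, in the limit `f → 0`, `q → k`. -/
noncomputable def limitConst (κ η k : ℝ) : ℂ :=
  (1 + Complex.I * (1 / (2 * k * η) : ℝ)) ^ 2 +
    ((1 / (2 * k * η) : ℝ) : ℂ) ^ 2 * Complex.exp (4 * Complex.I * κ * k)

/-- The coefficient of the phase `e^{4iq³/(3f)}` in `D_f(q²)`, in the limit `f → 0`, `q → k`. -/
noncomputable def limitAmplitude (κ η k : ℝ) : ℝ :=
  2 * (1 / (2 * k * η)) * cos (2 * κ * k) + 2 * (1 / (2 * k * η)) ^ 2 * sin (2 * κ * k)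

lemma norm_limitConst_sq (κ η k : ℝ) :
    ‖limitConst κ η k‖ ^ 2 = 1 + limitAmplitude κ η k ^ 2 := by
  have hangle : 4 * Complex.I * κ * k = ((2 * (2 * κ * k) : ℝ) : ℂ) * Complex.I := by
    push_cast
    ring
  have hpyth := sin_sq (2 * κ * k)
  rw [limitConst, limitAmplitude, hangle, Complex.exp_mul_I, ← Complex.ofReal_cos,
    ← Complex.ofReal_sin, cos_two_mul, sin_two_mul, ← Complex.normSq_eq_norm_sq,
    Complex.normSq_apply]
  generalize 1 / (2 * k * η) = γ
  generalize cos (2 * κ * k) = c at *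
  generalize sin (2 * κ * k) = s at *
  simp only [sq, Complex.add_re, Complex.mul_re, Complex.add_im, Complex.mul_im, Complex.one_re,
    Complex.one_im, Complex.I_re, Complex.I_im, Complex.ofReal_re, Complex.ofReal_im]
  ring_nf
  rw [hpyth]
  ring_nf

lemma detPoly_eq_add_mul (η S₁ P₁ T₁ S₂ P₂ : ℂ) {E : ℂ} (hE : E ≠ 0) :
    detPoly η S₁ P₁ T₁ S₂ P₂ =
      (1 - ωc ^ 2 * (P₁ + P₂) / η + ωc * (P₁ * P₂ - S₂ / E * (T₁ * E)) / η ^ 2) +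
      (-(ωc * (S₁ / E + S₂ / E) / η) + (S₁ / E * P₂ - S₂ / E * P₁) / η ^ 2) * E := by
  obtain ⟨s₁, rfl⟩ : ∃ s, S₁ = s * E := ⟨S₁ / E, (div_mul_cancel₀ _ hE).symm⟩
  obtain ⟨s₂, rfl⟩ : ∃ s, S₂ = s * E := ⟨S₂ / E, (div_mul_cancel₀ _ hE).symm⟩
  rw [mul_div_cancel_right₀ _ hE, mul_div_cancel_right₀ _ hE, detPoly]
  ring

lemma ωc_mul_ζc_sq : ωc * ζc ^ 2 = -1 := by
  linear_combination ωc * ζc_sq - ωc_pow_three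

lemma limitConst_eq {η k : ℝ} (hη : η ≠ 0) (hk : k ≠ 0) (κ : ℝ) :
    1 - ωc ^ 2 * (ζc / (2 * k) + ζc / (2 * k)) / η +
      ωc * (ζc / (2 * k) * (ζc / (2 * k)) - ζc ^ 2 / (2 * k) *
        Complex.exp (2 * Complex.I * κ * k) * (1 / (2 * k) /
          Complex.exp (2 * Complex.I * (-κ : ℝ) * k))) / (η : ℂ) ^ 2 = limitConst κ η k := by
  have hk' : (k : ℂ) ≠ 0 := Complex.ofReal_ne_zero.2 hk
  have hη' : (η : ℂ) ≠ 0 := Complex.ofReal_ne_zero.2 hη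
  have hratio : Complex.exp (4 * Complex.I * κ * k) =
      Complex.exp (2 * Complex.I * κ * k) / Complex.exp (2 * Complex.I * (-κ : ℝ) * k) := by
    rw [← Complex.exp_sub]
    congr 1
    push_cast
    ring
  have hne := Complex.exp_ne_zero (2 * Complex.I * (-κ : ℝ) * k)
  rw [limitConst, hratio]
  generalize Complex.exp (2 * Complex.I * κ * k) = e₂
  generalize Complex.exp (2 * Complex.I * (-κ : ℝ) * k) = e₁ at hne
  push_cast
  field_simp
  linear_combination (-4 * (k : ℂ) * η * e₁ * ζc) * ζc_sq + 4 * (k : ℂ) * η * e₁ * ζc_pow_three +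
    (e₁ - e₂) * ωc_mul_ζc_sq - e₁ * Complex.I_sq

lemma limitAmplitude_eq {η k : ℝ} (hη : η ≠ 0) (hk : k ≠ 0) (κ : ℝ) :
    -(ωc * (ζc ^ 2 / (2 * k) * Complex.exp (2 * Complex.I * (-κ : ℝ) * k) +
        ζc ^ 2 / (2 * k) * Complex.exp (2 * Complex.I * κ * k)) / η) +
      (ζc ^ 2 / (2 * k) * Complex.exp (2 * Complex.I * (-κ : ℝ) * k) * (ζc / (2 * k)) -
        ζc ^ 2 / (2 * k) * Complex.exp (2 * Complex.I * κ * k) * (ζc / (2 * k))) / (η : ℂ) ^ 2 =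
      limitAmplitude κ η k := by
  have hk' : (k : ℂ) ≠ 0 := Complex.ofReal_ne_zero.2 hk
  have hη' : (η : ℂ) ≠ 0 := Complex.ofReal_ne_zero.2 hη
  have hneg : 2 * Complex.I * (-κ : ℝ) * k = -(2 * κ * k) * Complex.I := by push_cast; ring
  have hpos : 2 * Complex.I * κ * k = (2 * κ * k) * Complex.I := by ring
  rw [limitAmplitude, hneg, hpos, Complex.exp_mul_I, Complex.exp_mul_I, Complex.cos_neg,
    Complex.sin_neg]
  push_cast
  generalize Complex.cos (2 * κ * k) = c
  generalize Complex.sin (2 * κ * k) = s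
  field_simp
  linear_combination (-4 * (k : ℂ) * η * c) * ωc_mul_ζc_sq - 2 * s * Complex.I * ζc_pow_three -
    2 * s * Complex.I_sq

lemma tendsto_Df_sub_limit {ι : Type*} {l : Filter ι} {f : ι → ℝ} {q : ι → ℂ} {k η C : ℝ}
    (hk : 0 < k) (hη : η ≠ 0) (κ : ℝ) (hf : Tendsto f l (𝓝[>] 0)) (hq : Tendsto q l (𝓝 (k : ℂ)))
    (hphase : ∀ᶠ i in l, ‖wkbPhase (f i) (q i)‖ ≤ C) :
    Tendsto (fun i => Df κ η (f i) (q i ^ 2) -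
      (limitConst κ η k + limitAmplitude κ η k * wkbPhase (f i) (q i))) l (𝓝 0) := by
  have hS₁ := tendsto_outSq_shifted hk hf hq (-κ)
  have hS₂ := tendsto_outSq_shifted hk hf hq κ
  have hP₁ := tendsto_outIn_shifted hk hf hq (-κ)
  have hP₂ := tendsto_outIn_shifted hk hf hq κ
  have hT₁ := tendsto_inSq_shifted hk hf hq (-κ)
  have hconst := ((((hP₁.add hP₂).const_mul (ωc ^ 2)).div_const (η : ℂ)).const_sub 1).add
    ((((hP₁.mul hP₂).sub (hS₂.mul hT₁)).const_mul ωc).div_const ((η : ℂ) ^ 2))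
  have hamp := (((hS₁.add hS₂).const_mul ωc).div_const (η : ℂ)).neg.add
    (((hS₁.mul hP₂).sub (hS₂.mul hP₁)).div_const ((η : ℂ) ^ 2))
  rw [limitConst_eq hη hk.ne' κ] at hconst
  rw [limitAmplitude_eq hη hk.ne' κ] at hamp
  have hlim := (tendsto_sub_nhds_zero_iff.2 hconst).add
    ((tendsto_sub_nhds_zero_iff.2 hamp).zero_mul_isBoundedUnder_le
      (g := fun i => wkbPhase (f i) (q i)) (isBoundedUnder_of_eventually_le hphase))
  rw [add_zero] at hlim
  refine hlim.congr fun i => ?_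
  have hneg : q i ^ 2 + ((-κ : ℝ) : ℂ) * f i = q i ^ 2 - κ * f i := by push_cast; ring
  rw [Df_eq_detPoly, detPoly_eq_add_mul _ _ _ _ _ _ (wkbPhase_ne_zero (f i) (q i)), hneg]
  ring

lemma exists_norm_Df_sub_limit_lt {k η : ℝ} (hk : 0 < k) (hη : η ≠ 0) (κ C : ℝ) {ε : ℝ}
    (hε : 0 < ε) :
    ∃ δ > 0, ∀ f : ℝ, 0 < f → f < δ → ∀ q : ℂ, ‖q - k‖ < δ → ‖wkbPhase f q‖ ≤ C →
      ‖Df κ η f (q ^ 2) - (limitConst κ η k + limitAmplitude κ η k * wkbPhase f q)‖ < ε := by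
  let s : Set (ℝ × ℂ) := {x | 0 < x.1 ∧ ‖wkbPhase x.1 x.2‖ ≤ C}
  have hs : ∀ᶠ x in 𝓝[s] ((0 : ℝ), (k : ℂ)), x ∈ s := self_mem_nhdsWithin
  have hfst : Tendsto Prod.fst (𝓝[s] ((0 : ℝ), (k : ℂ))) (𝓝[>] 0) :=
    tendsto_nhdsWithin_iff.2
      ⟨(continuous_fst.tendsto' _ _ rfl).mono_left nhdsWithin_le_nhds, hs.mono fun x hx => hx.1⟩
  have hlim := tendsto_Df_sub_limit hk hη κ hfst
    ((continuous_snd.tendsto' ((0 : ℝ), (k : ℂ)) _ rfl).mono_left nhdsWithin_le_nhds)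
    (hs.mono fun x hx => hx.2)
  have hsmall := hlim.norm.eventually (gt_mem_nhds (by rwa [norm_zero]))
  rw [eventually_nhdsWithin_iff, Metric.eventually_nhds_iff] at hsmall
  obtain ⟨δ, hδ, h⟩ := hsmall
  refine ⟨δ, hδ, fun f hf hfδ q hq hphase => @h (f, q) ?_ ⟨hf, hphase⟩⟩
  rw [Prod.dist_eq, max_lt_iff, dist_eq_norm, dist_eq_norm, sub_zero, norm_of_nonneg hf.le]
  exact ⟨hfδ, hq⟩

/-! ### Zeros of the limiting function and their persistence -/

lemma differentiable_Df (κ η f : ℝ) : Differentiable ℂ (Df κ η f) := by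
  have hcomp {g : ℂ → ℂ} (hg : Differentiable ℂ g) : Differentiable ℂ fun z => Ai (g z) :=
    differentiable_Ai.comp hg
  have h₁ : Differentiable ℂ fun z : ℂ => Ai (-ωc * (z - κ * f) * (f ^ (-(2 : ℝ) / 3) : ℝ)) :=
    hcomp (by fun_prop)
  have h₂ : Differentiable ℂ fun z : ℂ => Ai (-(z - κ * f) * (f ^ (-(2 : ℝ) / 3) : ℝ)) :=
    hcomp (by fun_prop)
  have h₃ : Differentiable ℂ fun z : ℂ => Ai (-ωc * (z + κ * f) * (f ^ (-(2 : ℝ) / 3) : ℝ)) :=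
    hcomp (by fun_prop)
  have h₄ : Differentiable ℂ fun z : ℂ => Ai (-(z + κ * f) * (f ^ (-(2 : ℝ) / 3) : ℝ)) :=
    hcomp (by fun_prop)
  exact ((((h₁.mul h₂).add (h₃.mul h₄)).div_const _).const_add 1).add
    (((h₃.mul h₂).mul ((h₁.mul h₄).sub (h₃.mul h₂))).div_const _)

lemma limitAmplitude_eq_div {κ η k : ℝ} (hη : η ≠ 0) (hk : k ≠ 0) :
    limitAmplitude κ η k =
      (2 * η * k * cos (2 * κ * k) + sin (2 * κ * k)) / (2 * (k * η) ^ 2) := by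
  rw [limitAmplitude]
  field_simp

lemma hasDerivAt_mul_cos_add_sin (η κ k : ℝ) :
    HasDerivAt (fun t => 2 * η * t * cos (2 * κ * t) + sin (2 * κ * t))
      (2 * (η + κ) * cos (2 * κ * k) - 4 * η * κ * k * sin (2 * κ * k)) k := by
  have hangle : HasDerivAt (fun t => 2 * κ * t) (2 * κ) k := hasDerivAt_const_mul _
  have hcoeff : HasDerivAt (fun t => 2 * η * t) (2 * η) k := hasDerivAt_const_mul _
  exact ((hcoeff.mul hangle.cos).add hangle.sin).congr_deriv (by ring)

-- At a zero of `2ηk cos(2κk) + sin(2κk)` the sine is `-2ηk` times the cosine, and the derivative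
-- is a positive multiple of the cosine, so it does not vanish.
lemma exists_limitAmplitude_ne_zero {κ η x y : ℝ} (hκ : 0 < κ) (hη : 0 < η) (hx : 0 < x)
    (hxy : x < y) : ∃ k ∈ Ioo x y, limitAmplitude κ η k ≠ 0 := by
  by_contra! hzero
  have hzero' : ∀ k ∈ Ioo x y, 2 * η * k * cos (2 * κ * k) + sin (2 * κ * k) = 0 := by
    intro k hk
    have hk₀ : 0 < k := hx.trans hk.1
    have h := hzero k hk
    rw [limitAmplitude_eq_div hη.ne' hk₀.ne', div_eq_zero_iff] at h
    exact h.resolve_right (by positivity)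
  obtain ⟨k, hk⟩ := nonempty_Ioo.2 hxy
  have hk₀ : 0 < k := hx.trans hk.1
  have hderiv : HasDerivAt (fun t => 2 * η * t * cos (2 * κ * t) + sin (2 * κ * t)) 0 k :=
    (hasDerivAt_const k (0 : ℝ)).congr_of_eventuallyEq
      (by filter_upwards [isOpen_Ioo.mem_nhds hk] with t ht using hzero' t ht)
  have hderiv₀ := (hasDerivAt_mul_cos_add_sin η κ k).unique hderiv
  have hsin : sin (2 * κ * k) = -(2 * η * k) * cos (2 * κ * k) := by linarith [hzero' k hk]
  have hcos : cos (2 * κ * k) = 0 := by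
    have hprod : cos (2 * κ * k) * (2 * (η + κ) + 8 * κ * (k * η) ^ 2) = 0 := by
      rw [hsin] at hderiv₀
      linear_combination hderiv₀
    exact (mul_eq_zero.1 hprod).resolve_right (by positivity)
  have hpyth := sin_sq_add_cos_sq (2 * κ * k)
  rw [hsin, hcos] at hpyth
  norm_num at hpyth

lemma abs_limitAmplitude_lt (κ η k : ℝ) : |limitAmplitude κ η k| < ‖limitConst κ η k‖ := by
  refine abs_lt_of_sq_lt_sq ?_ (norm_nonneg _)
  rw [norm_limitConst_sq]
  linarith

lemma exists_zero_of_norm_lt_of_sphere {g : ℂ → ℂ} {w₀ : ℂ} {r ε : ℝ} (hr : 0 < r)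
    (hg : DifferentiableOn ℂ g (Metric.closedBall w₀ r)) (hcenter : ‖g w₀‖ < ε)
    (hsphere : ∀ w ∈ Metric.sphere w₀ r, ε ≤ ‖g w‖) : ∃ w ∈ Metric.closedBall w₀ r, g w = 0 := by
  by_contra! hne
  have hε : 0 < ε := (norm_nonneg _).trans_lt hcenter
  have hw₀ : w₀ ∈ Metric.closedBall w₀ r := Metric.mem_closedBall_self hr.le
  rw [← closure_ball _ hr.ne'] at hg hne hw₀
  have hinv := Complex.norm_le_of_forall_mem_frontier_norm_le Metric.isBounded_ball
    (hg.diffContOnCl.inv hne) (C := ε⁻¹) (fun z hz => by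
      rw [frontier_ball _ hr.ne'] at hz
      rw [Pi.inv_apply, norm_inv]
      exact inv_anti₀ hε (hsphere z hz)) hw₀
  rw [Pi.inv_apply, norm_inv, inv_le_inv₀ (norm_pos_iff.2 (hne w₀ hw₀)) hε] at hinv
  exact hcenter.not_ge hinv

lemma exists_zero_of_norm_sub_lt {g h : ℂ → ℂ} {w₀ : ℂ} {r ε : ℝ} (hr : 0 < r)
    (hg : DifferentiableOn ℂ g (Metric.closedBall w₀ r)) (hzero : h w₀ = 0)
    (hsphere : ∀ w ∈ Metric.sphere w₀ r, 2 * ε ≤ ‖h w‖)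
    (hclose : ∀ w ∈ Metric.closedBall w₀ r, ‖g w - h w‖ < ε) :
    ∃ w ∈ Metric.closedBall w₀ r, g w = 0 := by
  refine exists_zero_of_norm_lt_of_sphere hr hg (ε := ε) ?_ fun w hw => ?_
  · simpa only [hzero, sub_zero] using hclose w₀ (Metric.mem_closedBall_self hr.le)
  · have htri := norm_sub_norm_le (h w) (g w)
    rw [norm_sub_rev] at htri
    linarith [hsphere w hw, hclose w (Metric.sphere_subset_closedBall hw)]

lemma exists_sphere_norm_ge {h : ℂ → ℂ} (hh : Continuous h) {w₀ : ℂ}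
    (hne : ∀ᶠ w in 𝓝[≠] w₀, h w ≠ 0) {R : ℝ} (hR : 0 < R) :
    ∃ r, 0 < r ∧ r < R ∧ ∃ ε > 0, ∀ w ∈ Metric.sphere w₀ r, ε ≤ ‖h w‖ := by
  rw [eventually_nhdsWithin_iff, Metric.eventually_nhds_iff] at hne
  obtain ⟨δ, hδ, hne⟩ := hne
  obtain ⟨r, hr, hrmin⟩ := exists_between (lt_min hδ hR)
  obtain ⟨w₁, hw₁, hmin⟩ := (isCompact_sphere w₀ r).exists_isMinOn
    (NormedSpace.sphere_nonempty.2 hr.le) hh.norm.continuousOn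
  have hw₁ne : w₁ ≠ w₀ := Metric.ne_of_mem_sphere hw₁ hr.ne'
  have hw₁δ : dist w₁ w₀ < δ :=
    (Metric.mem_sphere.1 hw₁).trans_lt (hrmin.trans_le (min_le_left _ _))
  have hpos : 0 < ‖h w₁‖ := norm_pos_iff.2 (hne hw₁δ hw₁ne)
  exact ⟨r, hr, hrmin.trans_le (min_le_right _ _), _, hpos, fun w hw => hmin hw⟩

lemma exists_zero_add_mul_exp {A B : ℂ} (hB : B ≠ 0) (hAB : ‖B‖ < ‖A‖) :
    ∃ w₀ : ℂ, w₀.im < 0 ∧ A + B * Complex.exp (Complex.I * w₀) = 0 := by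
  have hA : A ≠ 0 := norm_pos_iff.1 ((norm_nonneg B).trans_lt hAB)
  refine ⟨-Complex.I * Complex.log (-A / B), ?_, ?_⟩
  · have hlog : 0 < log (‖A‖ / ‖B‖) := log_pos ((one_lt_div (norm_pos_iff.2 hB)).2 hAB)
    simpa [Complex.log_re] using hlog
  · have hI : Complex.I * (-Complex.I * Complex.log (-A / B)) = Complex.log (-A / B) := by
      linear_combination -Complex.log (-A / B) * Complex.I_sq
    rw [hI, Complex.exp_log (div_ne_zero (neg_ne_zero.2 hA) hB), mul_div_cancel₀ _ hB,
      add_neg_cancel]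

lemma eventually_add_mul_exp_ne_zero (A : ℂ) {B : ℂ} (hB : B ≠ 0) (w₀ : ℂ) :
    ∀ᶠ w in 𝓝[≠] w₀, A + B * Complex.exp (Complex.I * w) ≠ 0 := by
  have hderiv : HasDerivAt (fun w => A + B * Complex.exp (Complex.I * w))
      (B * (Complex.exp (Complex.I * w₀) * Complex.I)) w₀ :=
    ((hasDerivAt_const_mul Complex.I).cexp.const_mul B).const_add A
  exact hderiv.eventually_ne
    (mul_ne_zero hB (mul_ne_zero (Complex.exp_ne_zero _) Complex.I_ne_zero))

lemma exists_isolated_zero_add_mul_exp {A B : ℂ} (hB : B ≠ 0) (hAB : ‖B‖ < ‖A‖) :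
    ∃ w₀ : ℂ, A + B * Complex.exp (Complex.I * w₀) = 0 ∧
      ∃ r, 0 < r ∧ r < 1 ∧ w₀.im + r < 0 ∧
        ∃ ε > 0, ∀ w ∈ Metric.sphere w₀ r, ε ≤ ‖A + B * Complex.exp (Complex.I * w)‖ := by
  obtain ⟨w₀, hw₀, hzero⟩ := exists_zero_add_mul_exp hB hAB
  obtain ⟨r, hr, hrmin, hsphere⟩ := exists_sphere_norm_ge (by fun_prop)
    (eventually_add_mul_exp_ne_zero A hB w₀) (lt_min one_pos (neg_pos.2 hw₀))
  rw [lt_min_iff] at hrmin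
  exact ⟨w₀, hzero, r, hr, hrmin.1, by linarith, hsphere⟩

/-! ### One resonance for each period of the phase -/

/-- The square root `q` of the energy at which the phase `4q³/(3f)` takes the value `t`. -/
noncomputable def phaseRoot (f : ℝ) (t : ℂ) : ℂ := (3 / 4 * f * t) ^ (1 / 3 : ℂ)

lemma phaseRoot_pow_three (f : ℝ) (t : ℂ) : phaseRoot f t ^ 3 = 3 / 4 * f * t := by
  simp [phaseRoot]

lemma wkbPhase_phaseRoot {f : ℝ} (hf : f ≠ 0) (n : ℕ) (w : ℂ) :
    wkbPhase f (phaseRoot f (2 * π * n + w)) = Complex.exp (Complex.I * w) := by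
  have hf' : (f : ℂ) ≠ 0 := Complex.ofReal_ne_zero.2 hf
  rw [wkbPhase, phaseRoot_pow_three, Complex.exp_eq_exp_iff_exists_int]
  refine ⟨n, ?_⟩
  field_simp
  push_cast
  ring

lemma differentiableAt_phaseRoot {f : ℝ} {t : ℂ} (ht : 3 / 4 * f * t ∈ Complex.slitPlane) :
    DifferentiableAt ℂ (phaseRoot f) t :=
  (differentiableAt_id.const_mul _).cpow_const ht

lemma tendsto_cpow_third {k : ℝ} (hk : 0 < k) :
    Tendsto (fun x : ℂ => x ^ (1 / 3 : ℂ)) (𝓝 ((k : ℂ) ^ 3)) (𝓝 (k : ℂ)) := by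
  have hslit : (k : ℂ) ^ 3 ∈ Complex.slitPlane := by
    exact_mod_cast Complex.ofReal_mem_slitPlane.2 (pow_pos hk 3)
  have hroot : ((k : ℂ) ^ 3) ^ (1 / 3 : ℂ) = k := by
    have harg : Complex.arg k = 0 := Complex.arg_ofReal_of_nonneg hk.le
    simpa using Complex.pow_cpow_nat_inv (n := 3) (x := k) (by simp)
      (by rw [harg]; simp [pi_pos]) (by rw [harg]; positivity)
  simpa only [hroot, id_eq] using tendsto_id.cpow (tendsto_const_nhds (x := (1 / 3 : ℂ))) hslit

lemma exists_forall_cpow_third {k : ℝ} (hk : 0 < k) {p : ℂ → Prop}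
    (hp : ∀ᶠ q in 𝓝 (k : ℂ), p q) :
    ∃ ρ > 0, ∀ x : ℂ, ‖x - (k : ℂ) ^ 3‖ < ρ → x ∈ Complex.slitPlane ∧ p (x ^ (1 / 3 : ℂ)) := by
  have hslit : (k : ℂ) ^ 3 ∈ Complex.slitPlane := by
    exact_mod_cast Complex.ofReal_mem_slitPlane.2 (pow_pos hk 3)
  obtain ⟨ρ, hρ, h⟩ := Metric.eventually_nhds_iff.1
    ((Complex.isOpen_slitPlane.eventually_mem hslit).and ((tendsto_cpow_third hk).eventually hp))
  exact ⟨ρ, hρ, fun x hx => h (by rwa [dist_eq_norm])⟩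

lemma norm_phase_sub_lt {f K M ρ : ℝ} (hf : 0 ≤ f) {n : ℕ} (hn : |3 / 2 * π * f * n - K| < ρ / 2)
    (hM : f * M < ρ / 2) {w : ℂ} (hw : ‖w‖ ≤ M) :
    ‖3 / 4 * f * (2 * π * n + w) - (K : ℂ)‖ < ρ := by
  have hsplit : 3 / 4 * f * (2 * π * n + w) - (K : ℂ) =
      ((3 / 2 * π * f * n - K : ℝ) : ℂ) + ((3 / 4 * f : ℝ) : ℂ) * w := by
    push_cast
    ring
  have hfw : f * ‖w‖ ≤ f * M := by gcongr
  have hfw₀ : 0 ≤ f * ‖w‖ := by positivity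
  calc ‖3 / 4 * f * (2 * π * n + w) - (K : ℂ)‖
      ≤ |3 / 2 * π * f * n - K| + 3 / 4 * f * ‖w‖ := by
        rw [hsplit]
        refine (norm_add_le _ _).trans_eq ?_
        rw [norm_mul, Complex.norm_real, Complex.norm_real, norm_eq_abs, norm_of_nonneg]
        positivity
    _ < ρ := by linarith

lemma norm_le_add_one_of_mem_closedBall {w w₀ : ℂ} (hw : w ∈ Metric.closedBall w₀ 1) :
    ‖w‖ ≤ ‖w₀‖ + 1 := by
  rw [mem_closedBall_iff_norm] at hw
  linarith [norm_sub_norm_le w w₀]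

lemma norm_exp_I_mul_le {w : ℂ} {M : ℝ} (hw : ‖w‖ ≤ M) : ‖Complex.exp (Complex.I * w)‖ ≤ exp M :=
  (Complex.norm_exp_le_exp_norm _).trans
    (exp_le_exp.2 (by rwa [norm_mul, Complex.norm_I, one_mul]))

lemma exists_zero_phaseRoot {κ η k : ℝ} (hk : 0 < k) (hη : η ≠ 0)
    (hB : limitAmplitude κ η k ≠ 0) {p : ℂ → Prop} (hp : ∀ᶠ q in 𝓝 (k : ℂ), p q) :
    ∃ τ > 0, ∃ f₀ > 0, ∃ w₀ : ℂ, ∀ f : ℝ, 0 < f → f < f₀ →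
      ∀ n : ℕ, |3 / 2 * π * f * n - k ^ 3| < τ →
      ∃ w ∈ Metric.closedBall w₀ 1, w.im < 0 ∧ p (phaseRoot f (2 * π * n + w)) ∧
        Df κ η f (phaseRoot f (2 * π * n + w) ^ 2) = 0 := by
  have hB' : (limitAmplitude κ η k : ℂ) ≠ 0 := Complex.ofReal_ne_zero.2 hB
  have hAB : ‖(limitAmplitude κ η k : ℂ)‖ < ‖limitConst κ η k‖ := by
    rw [Complex.norm_real]
    exact abs_limitAmplitude_lt κ η k
  obtain ⟨w₀, hzero, r, hr, hr₁, him₀, ε, hε, hsphere⟩ := exists_isolated_zero_add_mul_exp hB' hAB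
  have hball : Metric.closedBall w₀ r ⊆ Metric.closedBall w₀ 1 :=
    Metric.closedBall_subset_closedBall hr₁.le
  obtain ⟨δ, hδ, hlimit⟩ :=
    exists_norm_Df_sub_limit_lt hk hη κ (exp (‖w₀‖ + 1)) (half_pos hε)
  obtain ⟨ρ, hρ, hroot⟩ := exists_forall_cpow_third hk
    (hp.and (eventually_norm_sub_lt (k : ℂ) hδ))
  refine ⟨ρ / 2, half_pos hρ, min δ (ρ / 2 / (‖w₀‖ + 1)), by positivity, w₀,
    fun f hf hff₀ n hn => ?_⟩
  rw [lt_min_iff, lt_div_iff₀ (by positivity)] at hff₀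
  have hgood : ∀ w ∈ Metric.closedBall w₀ r,
      3 / 4 * f * (2 * π * n + w) ∈ Complex.slitPlane ∧ p (phaseRoot f (2 * π * n + w)) ∧
        ‖phaseRoot f (2 * π * n + w) - k‖ < δ := fun w hw => hroot _ <| by
    simpa using norm_phase_sub_lt hf.le hn hff₀.2 (norm_le_add_one_of_mem_closedBall (hball hw))
  have hdiff : DifferentiableOn ℂ (fun w => Df κ η f (phaseRoot f (2 * π * n + w) ^ 2))
      (Metric.closedBall w₀ r) := fun w hw =>
    ((differentiable_Df κ η f).differentiableAt.comp w
      (((differentiableAt_phaseRoot (hgood w hw).1).comp w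
        (differentiableAt_id.const_add _)).pow 2)).differentiableWithinAt
  obtain ⟨w, hw, hDf⟩ := exists_zero_of_norm_sub_lt
    (h := fun w => limitConst κ η k + limitAmplitude κ η k * Complex.exp (Complex.I * w))
    hr hdiff hzero (ε := ε / 2)
    (fun w hw => by linarith [hsphere w hw]) fun w hw => by
      have h := hlimit f hf hff₀.1 _ (hgood w hw).2.2
      rw [wkbPhase_phaseRoot hf.ne'] at h
      exact h (norm_exp_I_mul_le (norm_le_add_one_of_mem_closedBall (hball hw)))
  refine ⟨w, hball hw, ?_, (hgood w hw).2.1, hDf⟩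
  have him := (Complex.abs_im_le_norm (w - w₀)).trans (mem_closedBall_iff_norm.1 hw)
  rw [Complex.sub_im] at him
  linarith [le_abs_self (w.im - w₀.im)]

lemma exists_finset_abs_mul_sub_lt {s K τ : ℝ} (hs : 0 < s) (hsτ : s ≤ τ / 2) (hK : 0 ≤ K) :
    ∃ T : Finset ℕ, (∀ n ∈ T, |s * n - K| < τ) ∧ τ / 2 ≤ s * T.card := by
  refine ⟨Finset.Ico ⌈K / s⌉₊ (⌈K / s⌉₊ + ⌈τ / 2 / s⌉₊), fun n hn => ?_, ?_⟩
  · obtain ⟨hlow, hup⟩ := Finset.mem_Ico.1 hn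
    have h₁ : K ≤ s * n := (div_le_iff₀' hs).1 (Nat.ceil_le.1 hlow)
    obtain ⟨j, rfl⟩ := Nat.exists_eq_add_of_le hlow
    have hj : s * j < τ / 2 := (lt_div_iff₀' hs).1 (Nat.lt_ceil.1 (by omega))
    have hceil : s * ⌈K / s⌉₊ < K + s := by
      rw [← lt_div_iff₀' hs, add_div, div_self hs.ne']
      exact Nat.ceil_lt_add_one (by positivity)
    rw [abs_of_nonneg (sub_nonneg.2 h₁)]
    push_cast
    linarith
  · rw [Nat.card_Ico, Nat.add_sub_cancel_left]
    exact (div_le_iff₀' hs).1 (Nat.le_ceil _)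

lemma eq_of_sq_eq_sq_of_re_pos {q q' : ℂ} (hq : 0 < q.re) (hq' : 0 < q'.re)
    (h : q ^ 2 = q' ^ 2) : q = q' := by
  rw [← Complex.sq_cpow_two_inv hq, h, Complex.sq_cpow_two_inv hq']

lemma eq_of_phaseRoot_sq_eq {f : ℝ} (hf : f ≠ 0) {m n : ℕ} {w₀ v w : ℂ}
    (hv : v ∈ Metric.closedBall w₀ 1) (hw : w ∈ Metric.closedBall w₀ 1)
    (hmre : 0 < (phaseRoot f (2 * π * m + v)).re) (hnre : 0 < (phaseRoot f (2 * π * n + w)).re)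
    (h : phaseRoot f (2 * π * m + v) ^ 2 = phaseRoot f (2 * π * n + w) ^ 2) : m = n := by
  have hcube := congrArg (· ^ 3) (eq_of_sq_eq_sq_of_re_pos hmre hnre h)
  simp only [phaseRoot_pow_three] at hcube
  have hphase : 2 * π * (m : ℂ) + v = 2 * π * n + w :=
    mul_left_cancel₀ (mul_ne_zero (by norm_num) (Complex.ofReal_ne_zero.2 hf)) hcube
  have hdiff : ((2 * π * ((m - n : ℤ) : ℝ) : ℝ) : ℂ) = w - v := by
    push_cast
    linear_combination hphase
  have hdist : ‖w - v‖ ≤ 2 := by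
    rw [← dist_eq_norm]
    linarith [dist_triangle_right w v w₀, Metric.mem_closedBall.1 hv, Metric.mem_closedBall.1 hw]
  rw [← hdiff, Complex.norm_real, norm_mul, norm_of_nonneg two_pi_pos.le, norm_eq_abs,
    ← Int.cast_abs] at hdist
  by_contra hne
  have hone : (1 : ℝ) ≤ (|(m - n : ℤ)| : ℤ) := by
    exact_mod_cast Int.one_le_abs (by omega : (m - n : ℤ) ≠ 0)
  nlinarith [pi_gt_three]

lemma im_neg_of_pow_three_im_neg {q : ℂ} (hq : q ∈ wkbSector) (h : (q ^ 3).im < 0) : q.im < 0 := by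
  have him : (q ^ 3).im = q.im * (3 * q.re ^ 2 - q.im ^ 2) := by
    simp only [pow_succ, pow_zero, one_mul, Complex.mul_im, Complex.mul_re]
    ring
  have hsq : q.im ^ 2 ≤ q.re ^ 2 := sq_le_sq' (abs_le.1 hq.2).1 (abs_le.1 hq.2).2
  rw [him] at h
  exact neg_of_mul_neg_left h (by nlinarith [hq.1])

lemma sq_im_neg {q : ℂ} (hre : 0 < q.re) (him : q.im < 0) : (q ^ 2).im < 0 := by
  rw [sq, Complex.mul_im]
  nlinarith

lemma phaseRoot_sq_im_neg {f : ℝ} (hf : 0 < f) {n : ℕ} {w : ℂ} (hw : w.im < 0)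
    (hmem : phaseRoot f (2 * π * n + w) ∈ wkbSector) :
    (phaseRoot f (2 * π * n + w) ^ 2).im < 0 := by
  refine sq_im_neg hmem.1 (im_neg_of_pow_three_im_neg hmem ?_)
  have him : (3 / 4 * (f : ℂ) * (2 * π * n + w)).im = 3 / 4 * f * w.im := by simp
  rw [phaseRoot_pow_three, him]
  exact mul_neg_of_pos_of_neg (by positivity) hw

lemma eventually_re_sq_mem_Icc {a b k : ℝ} (ha : a < k ^ 2) (hb : k ^ 2 < b) :
    ∀ᶠ q in 𝓝 (k : ℂ), (q ^ 2).re ∈ Icc a b := by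
  have hcont : Continuous fun q : ℂ => (q ^ 2).re := by fun_prop
  refine (hcont.tendsto' (k : ℂ) (k ^ 2) ?_).eventually (Icc_mem_nhds ha hb)
  rw [← Complex.ofReal_pow, Complex.ofReal_re]

/-- The resonances below the segment `[a, b]`. -/
def resonances (κ η f a b : ℝ) : Set ℂ :=
  {z : ℂ | a ≤ z.re ∧ z.re ≤ b ∧ z.im < 0 ∧ Df κ η f z = 0}

lemma exists_finset_subset_resonances {κ η a b : ℝ} (hκ : 0 < κ) (hη : 0 < η) (ha : 0 < a)
    (hab : a < b) :
    ∃ c > 0, ∃ f₀ > 0, ∀ f : ℝ, 0 < f → f < f₀ → ∃ S : Finset ℂ,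
      (S : Set ℂ) ⊆ resonances κ η f a b ∧ c ≤ f * S.card := by
  obtain ⟨k, hk, hB⟩ := exists_limitAmplitude_ne_zero hκ hη (sqrt_pos.2 ha)
    (sqrt_lt_sqrt ha.le hab)
  have hk₀ : 0 < k := (sqrt_pos.2 ha).trans hk.1
  obtain ⟨τ, hτ, f₀, hf₀, w₀, hzero⟩ := exists_zero_phaseRoot hk₀ hη.ne' hB
    ((eventually_mem_wkbSector hk₀ tendsto_id).and
      (eventually_re_sq_mem_Icc ((sqrt_lt' hk₀).1 hk.1) ((lt_sqrt hk₀.le).1 hk.2)))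
  refine ⟨τ / 2 / (3 / 2 * π), by positivity, min f₀ (τ / 2 / (3 / 2 * π)), by positivity,
    fun f hf hff₀ => ?_⟩
  rw [lt_min_iff, lt_div_iff₀' (by positivity)] at hff₀
  obtain ⟨T, hT, hcard⟩ := exists_finset_abs_mul_sub_lt (K := k ^ 3) (by positivity) hff₀.2.le
    (by positivity)
  choose! w hball him hp hDf using fun n hn => hzero f hf hff₀.1 n (hT n hn)
  refine ⟨T.image fun n => phaseRoot f (2 * π * n + w n) ^ 2, ?_, ?_⟩
  · simp only [Finset.coe_image, image_subset_iff]
    exact fun n hn => ⟨(hp n hn).2.1, (hp n hn).2.2, phaseRoot_sq_im_neg hf (him n hn) (hp n hn).1,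
      hDf n hn⟩
  · rw [Finset.card_image_of_injOn fun m hm n hn h => eq_of_phaseRoot_sq_eq hf.ne' (hball m hm)
      (hball n hn) (hp m hm).1.1 (hp n hn).1.1 h, div_le_iff₀' (by positivity)]
    linarith

/-! ### No resonances far below the segment -/

/-- The region containing the square roots of points `w` with `Im w = -N` and
`0 < 4 Re w ≤ N`. There the outgoing wave at `q²` is exponentially large as `f → 0`. -/
def deepSector (N : ℝ) : Set ℂ :=
  {q | q ∈ wkbSector ∧ q.re ≤ -2 * q.im ∧ √N ≤ -2 * q.im ∧ √N ≤ ‖q‖}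

lemma norm_sq_eq_re_sq_add_im_sq (q : ℂ) : ‖q‖ ^ 2 = q.re ^ 2 + q.im ^ 2 := by
  rw [Complex.sq_norm, Complex.normSq_apply]
  ring

lemma exists_sq_eq_of_im_ne_zero {w : ℂ} (hw : w.im ≠ 0) : ∃ q : ℂ, q ^ 2 = w ∧ 0 < q.re := by
  have him := congrArg Complex.im (cpow_half_sq w)
  rw [sq, Complex.mul_im] at him
  rcases lt_trichotomy (w ^ (1 / 2 : ℂ)).re 0 with hneg | hzero | hpos
  · exact ⟨-w ^ (1 / 2 : ℂ), by rw [neg_sq, cpow_half_sq], by simpa using hneg⟩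
  · rw [hzero] at him
    exact absurd him (by simpa using hw.symm)
  · exact ⟨_, cpow_half_sq w, hpos⟩

lemma exists_mem_deepSector_sq_eq {w : ℂ} {N : ℝ} (hre : 0 < w.re) (him : w.im = -N)
    (hN : 4 * w.re ≤ N) : ∃ q ∈ deepSector N, q ^ 2 = w := by
  obtain ⟨q, rfl, hx⟩ := exists_sq_eq_of_im_ne_zero (w := w) (by rw [him]; linarith)
  rw [sq, Complex.mul_re] at hre hN
  rw [sq, Complex.mul_im] at him
  have hy : q.im < 0 := by
    by_contra! h
    nlinarith
  have hyx : |q.im| ≤ q.re := by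
    rw [abs_of_neg hy]
    nlinarith
  refine ⟨q, ⟨⟨hx, hyx⟩, ?_, ?_, ?_⟩, rfl⟩
  · by_contra! h
    nlinarith
  · refine sqrt_le_iff.2 ⟨by linarith, ?_⟩
    by_contra! h
    nlinarith
  · refine sqrt_le_iff.2 ⟨norm_nonneg q, ?_⟩
    rw [norm_sq_eq_re_sq_add_im_sq]
    nlinarith [sq_nonneg (q.re + q.im)]

lemma norm_wkbPhase (f : ℝ) (q : ℂ) : ‖wkbPhase f q‖ = exp (-(4 / 3) * (q ^ 3).im / f) := by
  rw [wkbPhase, Complex.norm_exp, Complex.div_ofReal_re,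
    show 4 / 3 * Complex.I * q ^ 3 = ((4 / 3 : ℝ) : ℂ) * (Complex.I * q ^ 3) by push_cast; ring,
    Complex.re_ofReal_mul, Complex.I_mul_re]
  ring_nf

lemma re_pow_three_le_of_mem_deepSector {q : ℂ} {N : ℝ} (hq : q ∈ deepSector N) :
    q.re ^ 3 ≤ -(q ^ 3).im := by
  obtain ⟨⟨hx, hyx⟩, hxy, -, -⟩ := hq
  have him : (q ^ 3).im = 3 * q.re ^ 2 * q.im - q.im ^ 3 := by
    simp only [pow_succ, pow_zero, one_mul, Complex.mul_im, Complex.mul_re]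
    ring
  have h₁ : -q.im * q.im ^ 2 ≤ -q.im * q.re ^ 2 :=
    mul_le_mul_of_nonneg_left (sq_le_sq.2 (hyx.trans (le_abs_self _))) (by linarith)
  have h₂ : q.re * q.re ^ 2 ≤ -2 * q.im * q.re ^ 2 :=
    mul_le_mul_of_nonneg_right hxy (sq_nonneg _)
  rw [him]
  nlinarith

lemma add_one_le_norm_wkbPhase {f N : ℝ} (hf : 0 < f) (hf₁ : f ≤ 1) {q : ℂ}
    (hq : q ∈ deepSector N) : 4 / 3 * q.re ^ 3 + 1 ≤ ‖wkbPhase f q‖ := by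
  have hre : 0 < q.re := hq.1.1
  have hexponent : 4 / 3 * q.re ^ 3 ≤ -(4 / 3) * (q ^ 3).im / f := by
    rw [le_div_iff₀ hf]
    calc 4 / 3 * q.re ^ 3 * f ≤ 4 / 3 * q.re ^ 3 := mul_le_of_le_one_right (by positivity) hf₁
      _ ≤ -(4 / 3) * (q ^ 3).im := by linarith [re_pow_three_le_of_mem_deepSector hq]
  rw [norm_wkbPhase]
  exact (add_le_add_left hexponent 1).trans (add_one_le_exp _)

lemma im_cubic_quotient_le {κ f Y : ℝ} {q₁ q₂ : ℂ} (hκf : |κ * f| ≤ 1)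
    (hsq : q₁ ^ 2 = q₂ ^ 2 + (-2 * κ : ℝ) * f) (hre : 1 ≤ (q₁ + q₂).re)
    (him : (q₁ + q₂).im ≤ -Y) :
    ((q₁ ^ 2 + q₁ * q₂ + q₂ ^ 2) / (q₁ + q₂)).im ≤ 1 - 3 / 4 * Y := by
  have hnorm : 1 ≤ ‖q₁ + q₂‖ := hre.trans (Complex.re_le_norm _)
  have hne : q₁ + q₂ ≠ 0 := norm_pos_iff.1 (one_pos.trans_le hnorm)
  have hquot : (q₁ ^ 2 + q₁ * q₂ + q₂ ^ 2) / (q₁ + q₂)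
      = ((3 / 4 : ℝ) : ℂ) * (q₁ + q₂) + ((κ * f : ℝ) : ℂ) ^ 2 / (q₁ + q₂) ^ 3 := by
    have hsq' : ((κ * f : ℝ) : ℂ) = (q₂ - q₁) * (q₁ + q₂) / 2 := by
      push_cast at hsq ⊢
      linear_combination hsq / 2
    rw [hsq']
    push_cast
    field_simp
    ring
  have hsmall : (((κ * f : ℝ) : ℂ) ^ 2 / (q₁ + q₂) ^ 3).im ≤ 1 := by
    refine (Complex.im_le_norm _).trans ?_
    rw [norm_div, norm_pow, norm_pow, Complex.norm_real, norm_eq_abs]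
    exact div_le_one_of_le₀
      ((pow_le_one₀ (abs_nonneg _) hκf).trans (one_le_pow₀ hnorm)) (by positivity)
  rw [hquot, Complex.add_im, Complex.im_ofReal_mul]
  linarith

lemma norm_wkbPhase_le_exp_mul {κ f Y : ℝ} {q₁ q₂ : ℂ} (hκ : 0 ≤ κ) (hf : f ≠ 0)
    (hκf : |κ * f| ≤ 1) (hsq : q₁ ^ 2 = q₂ ^ 2 + (-2 * κ : ℝ) * f) (hre : 1 ≤ (q₁ + q₂).re)
    (him : (q₁ + q₂).im ≤ -Y) :
    ‖wkbPhase f q₁‖ ≤ exp (8 * κ / 3 - 2 * κ * Y) * ‖wkbPhase f q₂‖ := by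
  have hne : q₁ + q₂ ≠ 0 := fun h => by norm_num [h] at hre
  rw [← div_le_iff₀ (norm_pos_iff.2 (wkbPhase_ne_zero f q₂)), ← norm_div,
    wkbPhase_div_wkbPhase hf hsq hne, Complex.norm_exp, mul_div_assoc, exp_le_exp]
  have hre_eq : (4 / 3 * Complex.I * (((-2 * κ : ℝ) : ℂ) *
      ((q₁ ^ 2 + q₁ * q₂ + q₂ ^ 2) / (q₁ + q₂)))).re
        = 8 * κ / 3 * ((q₁ ^ 2 + q₁ * q₂ + q₂ ^ 2) / (q₁ + q₂)).im := by
    rw [show ∀ X : ℂ, 4 / 3 * Complex.I * (((-2 * κ : ℝ) : ℂ) * X)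
        = ((-8 * κ / 3 : ℝ) : ℂ) * (Complex.I * X) from fun X => by push_cast; ring,
      Complex.re_ofReal_mul, Complex.I_mul_re]
    ring
  rw [hre_eq]
  calc 8 * κ / 3 * ((q₁ ^ 2 + q₁ * q₂ + q₂ ^ 2) / (q₁ + q₂)).im
      ≤ 8 * κ / 3 * (1 - 3 / 4 * Y) :=
        mul_le_mul_of_nonneg_left (im_cubic_quotient_le hκf hsq hre him) (by positivity)
    _ = 8 * κ / 3 - 2 * κ * Y := by ring

lemma norm_mul_sub_mul_div_le {η ε : ℝ} {u v S w : ℂ} (hη : 0 < η) (hε : ε ≤ 1 / 8)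
    (hεη : ε ≤ η / 8) (hu : ‖u‖ ≤ ε * ‖S‖) (hv : ‖v‖ ≤ ε) (hw : ‖w‖ ≤ ε) :
    ‖(u * v - S * w) / η‖ ≤ 9 / 64 * ‖S‖ := by
  have hε₀ : 0 ≤ ε := (norm_nonneg v).trans hv
  rw [norm_div, Complex.norm_real, norm_of_nonneg hη.le, div_le_iff₀ hη]
  calc ‖u * v - S * w‖ ≤ ‖u‖ * ‖v‖ + ‖S‖ * ‖w‖ := by
        simpa only [norm_mul] using norm_sub_le (u * v) (S * w)
    _ ≤ ε * ‖S‖ * ε + ‖S‖ * ε := by gcongr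
    _ = (ε + 1) * ‖S‖ * ε := by ring
    _ ≤ (1 / 8 + 1) * ‖S‖ * (η / 8) := by gcongr
    _ = 9 / 64 * ‖S‖ * η := by ring

-- Multiplied by `η`, the determinant is `-ω S₂` up to terms of total size at most `9/16 |S₂|`.
lemma detPoly_ne_zero {η ε : ℝ} {S₁ P₁ T₁ S₂ P₂ : ℂ} (hη : 0 < η) (hε : ε ≤ 1 / 8)
    (hεη : ε ≤ η / 8) (hεη' : ε * η ≤ 1 / 8) (hP₁ : ‖P₁‖ ≤ ε) (hP₂ : ‖P₂‖ ≤ ε) (hT₁ : ‖T₁‖ ≤ ε)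
    (hS₁ : ‖S₁‖ ≤ ε * ‖S₂‖) (hS₂ : 1 ≤ ε * ‖S₂‖) : detPoly η S₁ P₁ T₁ S₂ P₂ ≠ 0 := by
  intro hzero
  have hη' : (η : ℂ) ≠ 0 := Complex.ofReal_ne_zero.2 hη.ne'
  have hε₀ : 0 ≤ ε := (norm_nonneg P₁).trans hP₁
  have hS₂pos : 0 < ‖S₂‖ := pos_of_mul_pos_right (one_pos.trans_le hS₂) hε₀
  have hsolve : ωc * S₂ = η - ωc ^ 2 * (P₁ + P₂) + ωc * ((P₁ * P₂ - S₂ * T₁) / η) - ωc * S₁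
      + (S₁ * P₂ - S₂ * P₁) / η := by
    rw [detPoly] at hzero
    field_simp at hzero ⊢
    linear_combination -hzero
  have hη_le : ‖(η : ℂ)‖ ≤ 1 / 8 * ‖S₂‖ := by
    rw [Complex.norm_real, norm_of_nonneg hη.le]
    calc η ≤ η * (ε * ‖S₂‖) := le_mul_of_one_le_right hη.le hS₂
      _ = ε * η * ‖S₂‖ := by ring
      _ ≤ 1 / 8 * ‖S₂‖ := by gcongr
  have hP_le : ‖ωc ^ 2 * (P₁ + P₂)‖ ≤ 1 / 32 * ‖S₂‖ := by
    rw [norm_mul, norm_pow, norm_ωc, one_pow, one_mul]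
    nlinarith [norm_add_le P₁ P₂]
  have hPT_le : ‖ωc * ((P₁ * P₂ - S₂ * T₁) / η)‖ ≤ 9 / 64 * ‖S₂‖ := by
    rw [norm_mul, norm_ωc, one_mul]
    exact norm_mul_sub_mul_div_le hη hε hεη (by linarith) hP₂ hT₁
  have hS₁_le : ‖ωc * S₁‖ ≤ 1 / 8 * ‖S₂‖ := by
    rw [norm_mul, norm_ωc, one_mul]
    exact hS₁.trans (by gcongr)
  have htotal := norm_add_le_of_le (norm_sub_le_of_le (norm_add_le_of_le
    (norm_sub_le_of_le hη_le hP_le) hPT_le) hS₁_le)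
    (norm_mul_sub_mul_div_le hη hε hεη hS₁ hP₂ hP₁)
  rw [← hsolve, norm_mul, norm_ωc, one_mul] at htotal
  linarith

lemma norm_one_add_mem_Icc {e : ℂ} (he : ‖e‖ ≤ 1 / 2) : ‖1 + e‖ ∈ Icc (1 / 2 : ℝ) (3 / 2) := by
  have hup := norm_add_le 1 e
  have hlow := norm_sub_le (1 + e) e
  rw [norm_one] at hup
  rw [add_sub_cancel_right, norm_one] at hlow
  exact ⟨by linarith, by linarith⟩

lemma six_mul_sqrt_div_le {f x : ℝ} (hf : 0 ≤ f) (hf₁ : f ≤ 1 / 144) (hx : 1 ≤ x) :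
    6 * √(f / x ^ 3) ≤ 1 / 2 := by
  have h : √(f / x ^ 3) ≤ 1 / 12 := by
    refine sqrt_le_iff.2 ⟨by norm_num, ?_⟩
    linarith [div_le_self hf (one_le_pow₀ (n := 3) hx)]
  linarith

section WaveBounds

variable {f : ℝ} {q : ℂ}

lemma norm_one_add_outError_mem (hf : 0 < f) (hf₁ : f ≤ 1 / 144) (hq : q ∈ wkbSector)
    (hq₁ : 1 ≤ ‖q‖) : ‖1 + outError f q‖ ∈ Icc (1 / 2 : ℝ) (3 / 2) :=
  norm_one_add_mem_Icc ((norm_outError_le hf hq).trans (six_mul_sqrt_div_le hf.le hf₁ hq₁))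

lemma norm_one_add_inError_mem (hf : 0 < f) (hf₁ : f ≤ 1 / 144) (hq : q ∈ wkbSector)
    (hq₁ : 1 ≤ ‖q‖) : ‖1 + inError f q‖ ∈ Icc (1 / 2 : ℝ) (3 / 2) :=
  norm_one_add_mem_Icc ((norm_inError_le hf hq).trans (six_mul_sqrt_div_le hf.le hf₁ hq₁))

lemma norm_outIn_sq_le (hf : 0 < f) (hf₁ : f ≤ 1 / 144) (hq : q ∈ wkbSector) (hq₁ : 1 ≤ ‖q‖) :
    ‖outIn f (q ^ 2)‖ ≤ 2 / ‖q‖ := by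
  have hout := (norm_one_add_outError_mem hf hf₁ hq hq₁).2
  have hin := (norm_one_add_inError_mem hf hf₁ hq hq₁).2
  rw [outIn_sq hf hq, norm_mul, norm_mul, norm_div, norm_ζc, norm_mul, Complex.norm_two]
  calc 1 / (2 * ‖q‖) * (‖1 + outError f q‖ * ‖1 + inError f q‖)
      ≤ 1 / (2 * ‖q‖) * (3 / 2 * (3 / 2)) := by gcongr
    _ = 9 / 8 / ‖q‖ := by ring
    _ ≤ 2 / ‖q‖ := by gcongr; norm_num

lemma norm_inSq_sq_le (hf : 0 < f) (hf₁ : f ≤ 1 / 144) (hq : q ∈ wkbSector) (hq₁ : 1 ≤ ‖q‖)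
    (hphase : 1 ≤ ‖wkbPhase f q‖) : ‖inSq f (q ^ 2)‖ ≤ 2 / ‖q‖ := by
  have hin := (norm_one_add_inError_mem hf hf₁ hq hq₁).2
  rw [inSq_sq hf hq, norm_mul, norm_mul, norm_div, norm_one, norm_mul, Complex.norm_two, norm_inv,
    norm_pow]
  calc 1 / (2 * ‖q‖) * ‖wkbPhase f q‖⁻¹ * ‖1 + inError f q‖ ^ 2
      ≤ 1 / (2 * ‖q‖) * 1 * (3 / 2) ^ 2 := by
        gcongr
        exact inv_le_one_of_one_le₀ hphase
    _ = 9 / 8 / ‖q‖ := by ring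
    _ ≤ 2 / ‖q‖ := by gcongr; norm_num

lemma norm_outSq_sq (hf : 0 < f) (hq : q ∈ wkbSector) :
    ‖outSq f (q ^ 2)‖ = 1 / (2 * ‖q‖) * ‖wkbPhase f q‖ * ‖1 + outError f q‖ ^ 2 := by
  rw [outSq_sq hf hq, norm_mul, norm_mul, norm_div, norm_pow, norm_ζc, one_pow, norm_mul,
    Complex.norm_two, norm_pow]

lemma norm_outSq_sq_le (hf : 0 < f) (hf₁ : f ≤ 1 / 144) (hq : q ∈ wkbSector) (hq₁ : 1 ≤ ‖q‖) :
    ‖outSq f (q ^ 2)‖ ≤ 2 / ‖q‖ * ‖wkbPhase f q‖ := by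
  have hout := (norm_one_add_outError_mem hf hf₁ hq hq₁).2
  calc ‖outSq f (q ^ 2)‖ ≤ 1 / (2 * ‖q‖) * ‖wkbPhase f q‖ * (3 / 2) ^ 2 := by
        rw [norm_outSq_sq hf hq]
        gcongr
    _ = 9 / 8 / ‖q‖ * ‖wkbPhase f q‖ := by ring
    _ ≤ 2 / ‖q‖ * ‖wkbPhase f q‖ := by gcongr; norm_num

lemma le_norm_outSq_sq (hf : 0 < f) (hf₁ : f ≤ 1 / 144) (hq : q ∈ wkbSector) (hq₁ : 1 ≤ ‖q‖) :
    1 / (8 * ‖q‖) * ‖wkbPhase f q‖ ≤ ‖outSq f (q ^ 2)‖ := by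
  have hout := (norm_one_add_outError_mem hf hf₁ hq hq₁).1
  calc 1 / (8 * ‖q‖) * ‖wkbPhase f q‖ = 1 / (2 * ‖q‖) * ‖wkbPhase f q‖ * (1 / 2) ^ 2 := by ring
    _ ≤ ‖outSq f (q ^ 2)‖ := by
        rw [norm_outSq_sq hf hq]
        gcongr

lemma one_le_mul_norm_outSq_sq (hf : 0 < f) (hf₁ : f ≤ 1 / 144) {N : ℝ} (hq : q ∈ deepSector N)
    (hN : 1 ≤ N) : 1 ≤ 48 / N * ‖outSq f (q ^ 2)‖ := by
  have hre : 0 < q.re := hq.1.1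
  have hnorm : ‖q‖ ≤ 2 * q.re := (norm_le_of_mem_wkbSector hq.1).trans (by linarith)
  have hq₁ : 1 ≤ ‖q‖ := (one_le_sqrt.2 hN).trans hq.2.2.2
  have hphase := add_one_le_norm_wkbPhase hf (by linarith) hq
  have hN_le : N ≤ (2 * q.re) ^ 2 :=
    (sqrt_le_left (by positivity)).1 (hq.2.2.2.trans hnorm)
  rw [← inv_div, ← div_eq_inv_mul, one_le_div₀ (by positivity)]
  calc N / 48 ≤ (2 * q.re) ^ 2 / 48 := by gcongr
    _ = 1 / (8 * (2 * q.re)) * (4 / 3 * q.re ^ 3) := by field_simp; norm_num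
    _ ≤ 1 / (8 * ‖q‖) * ‖wkbPhase f q‖ := by gcongr; linarith
    _ ≤ ‖outSq f (q ^ 2)‖ := le_norm_outSq_sq hf hf₁ hq.1 hq₁

end WaveBounds

lemma norm_le_two_mul_norm_of_sq_eq {q₁ q₂ : ℂ} {t : ℝ} (ht : |t| ≤ 2) (hq₁ : 1 ≤ ‖q₁‖)
    (hsq : q₂ ^ 2 = q₁ ^ 2 + t) : ‖q₂‖ ≤ 2 * ‖q₁‖ := by
  refine (pow_le_pow_iff_left₀ (norm_nonneg _) (by positivity) two_ne_zero).1 ?_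
  have h := norm_add_le (q₁ ^ 2) (t : ℂ)
  rw [← hsq, norm_pow, norm_pow, Complex.norm_real, norm_eq_abs] at h
  nlinarith

/-- `N` is large enough, relative to the smallness parameter `ε`, for `D_f` not to vanish on
the line `Im z = -N` below a fixed segment. -/
structure IsDeepLevel (κ b ε N : ℝ) : Prop where
  four_mul_le : 4 * (b + 1) ≤ N
  one_le : 1 ≤ N
  two_div_sqrt_le : 2 / √N ≤ ε
  div_le : 48 / N ≤ ε
  exp_le : 32 * exp (8 * κ / 3 - 2 * κ * √N) ≤ ε

lemma eventually_isDeepLevel {κ ε : ℝ} (hκ : 0 < κ) (hε : 0 < ε) (b : ℝ) :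
    ∀ᶠ N in atTop, IsDeepLevel κ b ε N := by
  have hexponent : Tendsto (fun N : ℝ => 8 * κ / 3 - 2 * κ * √N) atTop atBot := by
    simpa only [sub_eq_add_neg, Function.comp_def] using
      tendsto_atBot_add_const_left atTop (8 * κ / 3)
        (tendsto_neg_atTop_atBot.comp (tendsto_sqrt_atTop.const_mul_atTop (by positivity)))
  have hexp : Tendsto (fun N : ℝ => 32 * exp (8 * κ / 3 - 2 * κ * √N)) atTop (𝓝 0) := by
    simpa using (tendsto_exp_atBot.comp hexponent).const_mul 32
  filter_upwards [eventually_ge_atTop (4 * (b + 1)), eventually_ge_atTop 1,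
    (tendsto_sqrt_atTop.const_div_atTop 2).eventually_le_const hε,
    (tendsto_id.const_div_atTop 48).eventually_le_const hε, hexp.eventually_le_const hε]
    with N h₁ h₂ h₃ h₄ h₅ using ⟨h₁, h₂, h₃, h₄, h₅⟩

lemma norm_outSq_sq_le_mul {κ f b ε N : ℝ} {q₁ q₂ : ℂ} (hκ : 0 ≤ κ) (hf : 0 < f)
    (hf₁ : f ≤ 1 / 144) (hκf : κ * f ≤ 1) (hN : IsDeepLevel κ b ε N) (hq₁ : q₁ ∈ deepSector N)
    (hq₂ : q₂ ∈ deepSector N) (hsq : q₁ ^ 2 = q₂ ^ 2 + (-2 * κ : ℝ) * f) :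
    ‖outSq f (q₁ ^ 2)‖ ≤ ε * ‖outSq f (q₂ ^ 2)‖ := by
  have hsqrt : 1 ≤ √N := one_le_sqrt.2 hN.one_le
  obtain ⟨⟨-, hsec₁⟩, -, him₁, hnorm₁⟩ := id hq₁
  obtain ⟨⟨-, hsec₂⟩, -, him₂, hnorm₂⟩ := id hq₂
  have hκf' : |κ * f| ≤ 1 := by rwa [abs_of_nonneg (by positivity)]
  have hphase : ‖wkbPhase f q₁‖ ≤ exp (8 * κ / 3 - 2 * κ * √N) * ‖wkbPhase f q₂‖ := by
    refine norm_wkbPhase_le_exp_mul hκ hf.ne' hκf' hsq ?_ ?_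
    · rw [Complex.add_re]
      linarith [neg_abs_le q₁.im, neg_abs_le q₂.im]
    · rw [Complex.add_im]
      linarith
  have hnorm : ‖q₂‖ ≤ 2 * ‖q₁‖ := by
    refine norm_le_two_mul_norm_of_sq_eq (t := 2 * (κ * f)) ?_ (hsqrt.trans hnorm₁) ?_
    · rw [abs_mul, abs_two]
      linarith
    · push_cast at hsq ⊢
      linear_combination -hsq
  have hpos₂ : 0 < ‖q₂‖ := one_pos.trans_le (hsqrt.trans hnorm₂)
  have hε : 0 ≤ ε := le_trans (by positivity) hN.exp_le
  calc ‖outSq f (q₁ ^ 2)‖ ≤ 2 / ‖q₁‖ * ‖wkbPhase f q₁‖ :=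
        norm_outSq_sq_le hf hf₁ hq₁.1 (hsqrt.trans hnorm₁)
    _ ≤ 2 / (‖q₂‖ / 2) * (exp (8 * κ / 3 - 2 * κ * √N) * ‖wkbPhase f q₂‖) := by
        gcongr
        linarith
    _ = 32 * exp (8 * κ / 3 - 2 * κ * √N) * (1 / (8 * ‖q₂‖) * ‖wkbPhase f q₂‖) := by
        field_simp
        ring
    _ ≤ ε * ‖outSq f (q₂ ^ 2)‖ :=
        mul_le_mul hN.exp_le (le_norm_outSq_sq hf hf₁ hq₂.1 (hsqrt.trans hnorm₂))
          (by positivity) hε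

lemma Df_ne_zero_of_isDeepLevel {κ η b f ε : ℝ} {z : ℂ} (hκ : 0 ≤ κ) (hη : 0 < η) (hf : 0 < f)
    (hf₁ : f ≤ 1 / 144) (hκf : κ * f ≤ 1) (hza : κ * f < z.re) (hzb : z.re ≤ b)
    (hN : IsDeepLevel κ b ε (-z.im)) (hε : ε ≤ 1 / 8) (hεη : ε ≤ η / 8) (hεη' : ε * η ≤ 1 / 8) :
    Df κ η f z ≠ 0 := by
  have hκf₀ : 0 ≤ κ * f := by positivity
  obtain ⟨q₁, hq₁, hsq₁⟩ := exists_mem_deepSector_sq_eq (w := z - κ * f) (N := -z.im)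
    (by simpa using hza) (by simp) (by simp; linarith [hN.four_mul_le])
  obtain ⟨q₂, hq₂, hsq₂⟩ := exists_mem_deepSector_sq_eq (w := z + κ * f) (N := -z.im)
    (by simp; linarith) (by simp) (by simp; linarith [hN.four_mul_le])
  have hsqrt : 1 ≤ √(-z.im) := one_le_sqrt.2 hN.one_le
  have hsmall : ∀ {q : ℂ}, q ∈ deepSector (-z.im) → 2 / ‖q‖ ≤ ε := fun hq =>
    (div_le_div_of_nonneg_left two_pos.le (by positivity) hq.2.2.2).trans hN.two_div_sqrt_le
  have hone₁ : 1 ≤ ‖q₁‖ := hsqrt.trans hq₁.2.2.2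
  have hone₂ : 1 ≤ ‖q₂‖ := hsqrt.trans hq₂.2.2.2
  have hphase : 1 ≤ ‖wkbPhase f q₁‖ := by
    have hre : 0 < q₁.re := hq₁.1.1
    exact (le_add_of_nonneg_left (by positivity)).trans
      (add_one_le_norm_wkbPhase hf (by linarith) hq₁)
  rw [Df_eq_detPoly, ← hsq₁, ← hsq₂]
  refine detPoly_ne_zero hη hε hεη hεη'
    ((norm_outIn_sq_le hf hf₁ hq₁.1 hone₁).trans (hsmall hq₁))
    ((norm_outIn_sq_le hf hf₁ hq₂.1 hone₂).trans (hsmall hq₂))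
    ((norm_inSq_sq_le hf hf₁ hq₁.1 hone₁ hphase).trans (hsmall hq₁))
    (norm_outSq_sq_le_mul hκ hf hf₁ hκf hN hq₁ hq₂ ?_) ?_
  · rw [hsq₁, hsq₂]
    push_cast
    ring
  · refine (one_le_mul_norm_outSq_sq hf hf₁ hq₂ hN.one_le).trans ?_
    gcongr
    exact hN.div_le

lemma exists_forall_Df_eq_zero_lt_im {κ η a : ℝ} (hκ : 0 < κ) (hη : 0 < η) (ha : 0 < a) (b : ℝ) :
    ∃ M : ℝ, ∃ f₀ > 0, ∀ f, 0 < f → f < f₀ → ∀ z : ℂ, a ≤ z.re → z.re ≤ b → Df κ η f z = 0 →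
      -M < z.im := by
  obtain ⟨ε, hε, hε₁, hε₂, hε₃⟩ : ∃ ε > 0, ε ≤ 1 / 8 ∧ ε ≤ η / 8 ∧ ε * η ≤ 1 / 8 := by
    refine ⟨min (1 / 8) (min (η / 8) (1 / 8 / η)), by positivity, min_le_left _ _,
      (min_le_right _ _).trans (min_le_left _ _), ?_⟩
    rw [← le_div_iff₀ hη]
    exact (min_le_right _ _).trans (min_le_right _ _)
  obtain ⟨M, hM⟩ := eventually_atTop.1 (eventually_isDeepLevel hκ hε b)
  refine ⟨M, min (1 / 144) (min (1 / κ) (a / κ)), by positivity, fun f hf hff₀ z hza hzb hz => ?_⟩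
  simp only [lt_min_iff, lt_div_iff₀' hκ] at hff₀
  by_contra! him
  exact Df_ne_zero_of_isDeepLevel hκ.le hη hf hff₀.1.le hff₀.2.1.le (hff₀.2.2.trans_le hza) hzb
    (hM _ (by linarith)) hε₁ hε₂ hε₃ hz

/-! ### Growth of the determinant -/

lemma sqrt_mul_rpow_pow_three_le {f x R : ℝ} (hf : 0 < f) (hx : x ≤ R) :
    √(x * f ^ (-(2 : ℝ) / 3)) ^ 3 ≤ √R ^ 3 / f := by
  have hscale : √(f ^ (-(2 : ℝ) / 3)) ^ 3 = f⁻¹ := by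
    rw [rpow_neg_two_thirds hf.le, sqrt_div zero_le_one, sqrt_one, sqrt_sq (by positivity), div_pow,
      rpow_third_pow_three hf.le, one_pow, one_div]
  rw [sqrt_mul' _ (by positivity), mul_pow, hscale, ← div_eq_mul_inv]
  gcongr

lemma exists_norm_scaled_Ai_le (R : ℝ) : ∃ C K : ℝ, 0 ≤ C ∧ 0 ≤ K ∧ ∀ f : ℝ, 0 < f → ∀ x : ℂ,
    ‖x‖ ≤ R → ‖Ai (x * ((f ^ (-(2 : ℝ) / 3) : ℝ) : ℂ))‖ ≤ C * exp (K / f) := by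
  obtain ⟨C, hC, hAi⟩ := exists_norm_Ai_le
  refine ⟨C, 3 * √R ^ 3, hC, by positivity, fun f hf x hx => (hAi _).trans ?_⟩
  rw [norm_mul, Complex.norm_real, norm_of_nonneg (by positivity), mul_div_assoc]
  gcongr
  exact sqrt_mul_rpow_pow_three_le hf hx

lemma inv_norm_Wf_le {f : ℝ} (hf : 0 < f) (hf₁ : f ≤ 1) : ‖Wf f‖⁻¹ ≤ 2 * π * exp (1 / f) := by
  have hWf : ‖Wf f‖ = f ^ ((1 : ℝ) / 3) / (2 * π) := by
    rw [Wf_eq, norm_div, norm_mul, norm_inv, norm_ζc, inv_one, mul_one, Complex.norm_real,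
      norm_of_nonneg (by positivity), norm_mul, Complex.norm_real, norm_of_nonneg pi_pos.le,
      Complex.norm_two]
  rw [hWf, inv_div, div_eq_mul_inv]
  gcongr
  calc (f ^ ((1 : ℝ) / 3))⁻¹ ≤ (f ^ (1 : ℝ))⁻¹ :=
        inv_anti₀ (by positivity) (rpow_le_rpow_of_exponent_ge hf hf₁ (by norm_num))
    _ = 1 / f := by rw [rpow_one, one_div]
    _ ≤ exp (1 / f) := by linarith [add_one_le_exp (1 / f)]

lemma exists_norm_Ai_mul_Ai_div_le (η R : ℝ) : ∃ C K : ℝ, 0 ≤ C ∧ 0 ≤ K ∧ ∀ f : ℝ, 0 < f → f ≤ 1 →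
    ∀ x y : ℂ, ‖x‖ ≤ R → ‖y‖ ≤ R →
      ‖Ai (x * ((f ^ (-(2 : ℝ) / 3) : ℝ) : ℂ)) * Ai (y * ((f ^ (-(2 : ℝ) / 3) : ℝ) : ℂ)) /
        (η * Wf f)‖ ≤ C * exp (K / f) := by
  obtain ⟨C, K, hC, hK, hAi⟩ := exists_norm_scaled_Ai_le R
  refine ⟨C * C * (2 * π) / |η|, 2 * K + 1, by positivity, by positivity,
    fun f hf hf₁ x y hx hy => ?_⟩
  rw [norm_div, norm_mul, norm_mul, Complex.norm_real, norm_eq_abs, mul_comm |η|, ← div_div,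
    div_eq_mul_inv (_ * _) ‖Wf f‖]
  calc _ ≤ C * exp (K / f) * (C * exp (K / f)) * (2 * π * exp (1 / f)) / |η| := by
        gcongr
        exacts [hAi f hf x hx, hAi f hf y hy, inv_norm_Wf_le hf hf₁]
    _ = C * C * (2 * π) / |η| * (exp (K / f) * exp (K / f) * exp (1 / f)) := by ring
    _ = C * C * (2 * π) / |η| * exp ((2 * K + 1) / f) := by
        rw [← exp_add, ← exp_add]
        ring_nf

lemma Df_eq_quotients (κ η f : ℝ) (z : ℂ) :
    Df κ η f z = 1 + (alphaP κ f z / (η * Wf f) + alphaM κ f z / (η * Wf f)) +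
      betaP κ f z / (η * Wf f) * (betaM κ f z / (η * Wf f) - betaP κ f z / (η * Wf f)) := by
  rw [Df]
  ring

lemma norm_shift_le {κ f R : ℝ} {z : ℂ} (hf : 0 ≤ f) (hf₁ : f ≤ 1) (hz : ‖z‖ ≤ R) :
    ‖z - κ * f‖ ≤ R + |κ| ∧ ‖z + κ * f‖ ≤ R + |κ| := by
  have hκf : ‖(κ : ℂ) * f‖ ≤ |κ| := by
    rw [norm_mul, Complex.norm_real, Complex.norm_real, norm_eq_abs, norm_of_nonneg hf]
    exact mul_le_of_le_one_right (abs_nonneg κ) hf₁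
  exact ⟨norm_sub_le_of_le hz hκf, norm_add_le_of_le hz hκf⟩

lemma exists_norm_Df_le (κ η R : ℝ) : ∃ C K : ℝ, 1 ≤ C ∧ 0 ≤ K ∧ ∀ f : ℝ, 0 < f → f ≤ 1 →
    ∀ z : ℂ, ‖z‖ ≤ R → ‖Df κ η f z‖ ≤ C * exp (K / f) := by
  obtain ⟨C, K, hC, hK, hbound⟩ := exists_norm_Ai_mul_Ai_div_le η (R + |κ|)
  refine ⟨1 + 2 * C + 2 * C ^ 2, 2 * K, by nlinarith, by positivity, fun f hf hf₁ z hz => ?_⟩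
  obtain ⟨hz₁, hz₂⟩ := norm_shift_le (κ := κ) hf.le hf₁ hz
  have hω : ∀ {x : ℂ}, ‖x‖ ≤ R + |κ| → ‖-ωc * x‖ ≤ R + |κ| := fun hx => by
    rwa [norm_mul, norm_neg, norm_ωc, one_mul]
  have hneg : ∀ {x : ℂ}, ‖x‖ ≤ R + |κ| → ‖-x‖ ≤ R + |κ| := fun hx => by rwa [norm_neg]
  have hαP := hbound f hf hf₁ _ _ (hω hz₁) (hneg hz₁)
  have hαM := hbound f hf hf₁ _ _ (hω hz₂) (hneg hz₂)
  have hβP := hbound f hf hf₁ _ _ (hω hz₂) (hneg hz₁)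
  have hβM := hbound f hf hf₁ _ _ (hω hz₁) (hneg hz₂)
  have hexp : 1 ≤ exp (K / f) := one_le_exp (by positivity)
  rw [Df_eq_quotients, alphaP, alphaM, betaP, betaM]
  calc _ ≤ ‖(1 : ℂ)‖ + (C * exp (K / f) + C * exp (K / f)) +
        C * exp (K / f) * (C * exp (K / f) + C * exp (K / f)) :=
        norm_add_le_of_le (norm_add_le_of_le le_rfl (norm_add_le_of_le hαP hαM))
          (norm_mul_le_of_le hβP (norm_sub_le_of_le hβM hβP))
    _ = 1 + 2 * C * exp (K / f) + 2 * C ^ 2 * exp (K / f) ^ 2 := by rw [norm_one]; ring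
    _ ≤ exp (K / f) ^ 2 + 2 * C * exp (K / f) ^ 2 + 2 * C ^ 2 * exp (K / f) ^ 2 := by
        gcongr
        exacts [one_le_pow₀ hexp, le_self_pow₀ hexp two_ne_zero]
    _ = (1 + 2 * C + 2 * C ^ 2) * exp (2 * K / f) := by
        rw [← exp_nat_mul, Nat.cast_ofNat, mul_div_assoc]
        ring

/-! ### Counting zeros with multiplicity -/

lemma analyticOrderAt_eq_vanishingOrder {g : ℂ → ℂ} {z : ℂ} (hg : AnalyticAt ℂ g z)
    (htop : analyticOrderAt g z ≠ ⊤) : analyticOrderAt g z = vanishingOrder g z := by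
  obtain ⟨n, hn⟩ := ENat.ne_top_iff_exists.1 htop
  obtain ⟨hlt, hne⟩ := (analyticOrderAt_eq_nat_iff_iteratedDeriv_eq_zero hg).1 hn.symm
  have hleast : IsLeast {m : ℕ | iteratedDeriv m g z ≠ 0} n :=
    ⟨hne, fun m hm => not_lt.1 fun h => hm (hlt m h)⟩
  rw [← hn, vanishingOrder, hleast.csInf_eq]

section Entire

variable {g : ℂ → ℂ} {c : ℂ}

lemma analyticOrderAt_eq_vanishingOrder_of_differentiable (hg : Differentiable ℂ g)
    (hc : g c ≠ 0) (z : ℂ) : analyticOrderAt g z = vanishingOrder g z := by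
  have han : AnalyticOnNhd ℂ g univ := fun x _ => hg.analyticAt x
  refine analyticOrderAt_eq_vanishingOrder (hg.analyticAt z) fun htop => hc ?_
  exact han.eqOn_zero_of_preconnected_of_eventuallyEq_zero isPreconnected_univ (mem_univ z)
    (analyticOrderAt_eq_top.1 htop) (mem_univ c)

lemma one_le_vanishingOrder (hg : Differentiable ℂ g) (hc : g c ≠ 0) {z : ℂ} (hz : g z = 0) :
    1 ≤ vanishingOrder g z := by
  have h : analyticOrderAt g z ≠ 0 := (hg.analyticAt z).analyticOrderAt_ne_zero.2 hz
  rw [analyticOrderAt_eq_vanishingOrder_of_differentiable hg hc, Nat.cast_ne_zero] at h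
  exact Nat.one_le_iff_ne_zero.2 h

lemma divisor_eq_vanishingOrder (hg : Differentiable ℂ g) (hc : g c ≠ 0) {U : Set ℂ} {z : ℂ}
    (hz : z ∈ U) : MeromorphicOn.divisor g U z = vanishingOrder g z := by
  rw [MeromorphicOn.AnalyticOnNhd.divisor_apply (fun x _ => hg.analyticAt x) hz,
    analyticOrderAt_eq_vanishingOrder_of_differentiable hg hc]
  rfl

lemma subset_support_divisor (hg : Differentiable ℂ g) (hc : g c ≠ 0) {U Z : Set ℂ} (hZ : Z ⊆ U)
    (hzero : ∀ z ∈ Z, g z = 0) : Z ⊆ Function.support (MeromorphicOn.divisor g U) := fun z hz => by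
  rw [Function.mem_support, divisor_eq_vanishingOrder hg hc (hZ hz)]
  have h := one_le_vanishingOrder hg hc (hzero z hz)
  omega

lemma finsum_vanishingOrder_le_finsum_divisor (hg : Differentiable ℂ g) (hc : g c ≠ 0)
    {U Z : Set ℂ} (hU : (Function.support (MeromorphicOn.divisor g U)).Finite) (hZ : Z ⊆ U)
    (hzero : ∀ z ∈ Z, g z = 0) :
    ((∑ᶠ z ∈ Z, vanishingOrder g z : ℕ) : ℤ) ≤ ∑ᶠ z, MeromorphicOn.divisor g U z := by
  have hsub := subset_support_divisor hg hc hZ hzero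
  have hfin := hU.subset hsub
  rw [finsum_mem_eq_finite_toFinset_sum _ hfin, finsum_eq_sum _ hU, Nat.cast_sum]
  calc ∑ z ∈ hfin.toFinset, (vanishingOrder g z : ℤ)
      = ∑ z ∈ hfin.toFinset, MeromorphicOn.divisor g U z := Finset.sum_congr rfl fun z hz =>
        (divisor_eq_vanishingOrder hg hc (hZ (hfin.mem_toFinset.1 hz))).symm
    _ ≤ ∑ z ∈ hU.toFinset, MeromorphicOn.divisor g U z :=
        Finset.sum_le_sum_of_subset_of_nonneg (Finite.toFinset_mono hsub) fun z _ _ =>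
          MeromorphicOn.AnalyticOnNhd.divisor_nonneg (fun x _ => hg.analyticAt x) z

lemma finite_and_finsum_vanishingOrder_le (hg : Differentiable ℂ g) (hc : g c ≠ 0) {r M : ℝ}
    (hr : 0 < r) (hM : 1 ≤ M) (hbound : ∀ z ∈ Metric.sphere c (2 * r), ‖g z‖ ≤ M) {Z : Set ℂ}
    (hZ : Z ⊆ Metric.closedBall c r) (hzero : ∀ z ∈ Z, g z = 0) :
    Z.Finite ∧ ((∑ᶠ z ∈ Z, vanishingOrder g z : ℕ) : ℝ) ≤ log (M / ‖g c‖) / log 2 := by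
  have hr_abs : |r| = r := abs_of_pos hr
  have hr_abs₂ : |2 * r| = 2 * r := abs_of_pos (by positivity)
  have hjensen := AnalyticOnNhd.sum_divisor_le (f := g) (c := c) (r := r) (R := 2 * r)
    (by rwa [hr_abs]) (by rw [hr_abs, hr_abs₂]; linarith) hM (fun x _ => hg.analyticAt x) hc
    (by rwa [hr_abs₂])
  rw [hr_abs, mul_div_cancel_right₀ _ hr.ne'] at hjensen
  have hfin := (MeromorphicOn.divisor g (Metric.closedBall c r)).finiteSupport
    (isCompact_closedBall c r)
  refine ⟨hfin.subset (subset_support_divisor hg hc hZ hzero), le_trans ?_ hjensen⟩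
  exact_mod_cast finsum_vanishingOrder_le_finsum_divisor hg hc hfin hZ hzero

end Entire

lemma exists_le_norm_Df_sq {η k : ℝ} (hk : 0 < k) (hη : η ≠ 0) (κ : ℝ) :
    ∃ m > 0, ∃ f₀ > 0, ∀ f, 0 < f → f < f₀ → m ≤ ‖Df κ η f ((k : ℂ) ^ 2)‖ := by
  set m := (‖limitConst κ η k‖ - |limitAmplitude κ η k|) / 2 with hm_def
  have hm : 0 < m := by linarith [hm_def, abs_limitAmplitude_lt κ η k]
  obtain ⟨δ, hδ, hlimit⟩ := exists_norm_Df_sub_limit_lt hk hη κ 1 hm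
  refine ⟨m, hm, δ, hδ, fun f hf hfδ => ?_⟩
  have hphase : ‖wkbPhase f k‖ = 1 := by
    rw [norm_wkbPhase, ← Complex.ofReal_pow, Complex.ofReal_im]
    simp
  have hclose := hlimit f hf hfδ k (by simpa using hδ) hphase.le
  have hmain := norm_sub_norm_le (limitConst κ η k) (-(limitAmplitude κ η k * wkbPhase f k))
  rw [norm_neg, norm_mul, hphase, mul_one, Complex.norm_real, norm_eq_abs, sub_neg_eq_add] at hmain
  have hdiff := norm_sub_norm_le (limitConst κ η k + limitAmplitude κ η k * wkbPhase f k)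
    (Df κ η f ((k : ℂ) ^ 2))
  rw [norm_sub_rev] at hdiff
  linarith [hm_def]

lemma resonances_subset_closedBall {κ η f a b M : ℝ} (ha : 0 ≤ a)
    (hM : ∀ z ∈ resonances κ η f a b, -M < z.im) :
    resonances κ η f a b ⊆ Metric.closedBall (a : ℂ) (b + M) := by
  intro z hz
  have him := hM z hz
  obtain ⟨hza, hzb, hz₀, -⟩ := hz
  rw [mem_closedBall_iff_norm]
  refine (Complex.norm_le_abs_re_add_abs_im _).trans ?_
  rw [Complex.sub_re, Complex.sub_im, Complex.ofReal_re, Complex.ofReal_im, sub_zero,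
    abs_of_nonneg (sub_nonneg.2 hza), abs_of_neg hz₀]
  linarith

lemma mul_log_div_le {C K m x f : ℝ} (hC : 1 ≤ C) (hm : 0 < m) (hmx : m ≤ x) (hf : 0 < f)
    (hf₁ : f ≤ 1) : f * log (C * exp (K / f) / x) ≤ |log (C / m)| + K := by
  have hlog : log (C * exp (K / f) / x) ≤ |log (C / m)| + K / f := by
    calc log (C * exp (K / f) / x) ≤ log (C / m * exp (K / f)) := by
          refine log_le_log (div_pos (by positivity) (hm.trans_le hmx)) ?_
          rw [div_mul_eq_mul_div]
          gcongr
      _ = log (C / m) + K / f := by rw [log_mul (by positivity) (exp_ne_zero _), log_exp]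
      _ ≤ |log (C / m)| + K / f := by gcongr; exact le_abs_self _
  calc f * log (C * exp (K / f) / x) ≤ f * (|log (C / m)| + K / f) := by gcongr
    _ = f * |log (C / m)| + K := by field_simp
    _ ≤ |log (C / m)| + K := by gcongr; exact mul_le_of_le_one_left (abs_nonneg _) hf₁

lemma exists_mul_Jcount_le {κ η a b : ℝ} (hκ : 0 < κ) (hη : 0 < η) (ha : 0 < a) (hab : a ≤ b) :
    ∃ C : ℝ, ∃ f₀ > 0, ∀ f, 0 < f → f < f₀ → Df κ η f a ≠ 0 ∧ (resonances κ η f a b).Finite ∧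
      f * Jcount κ η f a b ≤ C := by
  obtain ⟨M, f₁, hf₁, hdeep⟩ := exists_forall_Df_eq_zero_lt_im hκ hη ha b
  obtain ⟨m, hm, f₂, hf₂, hcenter⟩ := exists_le_norm_Df_sq (sqrt_pos.2 ha) hη.ne' κ
  rw [← Complex.ofReal_pow, sq_sqrt ha.le] at hcenter
  have hr : 0 < b + |M| := by linarith [abs_nonneg M]
  obtain ⟨C, K, hC, hK, hgrowth⟩ := exists_norm_Df_le κ η (a + 2 * (b + |M|))
  refine ⟨(|log (C / m)| + K) / log 2, min (min f₁ f₂) 1, by positivity, fun f hf hff₀ => ?_⟩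
  simp only [lt_min_iff] at hff₀
  obtain ⟨⟨hff₁, hff₂⟩, hf_one⟩ := hff₀
  have hma := hcenter f hf hff₂
  have hne : Df κ η f a ≠ 0 := norm_pos_iff.1 (hm.trans_le hma)
  have hsphere : ∀ z ∈ Metric.sphere (a : ℂ) (2 * (b + |M|)), ‖Df κ η f z‖ ≤ C * exp (K / f) := by
    refine fun z hz => hgrowth f hf hf_one.le z ?_
    have h := norm_le_norm_add_norm_sub' z a
    rwa [mem_sphere_iff_norm.1 hz, Complex.norm_real, norm_of_nonneg ha.le] at h
  obtain ⟨hfin, hcount⟩ := finite_and_finsum_vanishingOrder_le (differentiable_Df κ η f) hne hr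
    (one_le_mul_of_one_le_of_one_le hC (one_le_exp (by positivity))) hsphere
    (resonances_subset_closedBall ha.le fun z hz =>
      (neg_le_neg (le_abs_self M)).trans_lt (hdeep f hf hff₁ z hz.1 hz.2.1 hz.2.2.2))
    fun z hz => hz.2.2.2
  refine ⟨hne, hfin, ?_⟩
  calc f * Jcount κ η f a b ≤ f * (log (C * exp (K / f) / ‖Df κ η f a‖) / log 2) := by
        gcongr
        exact hcount
    _ = f * log (C * exp (K / f) / ‖Df κ η f a‖) / log 2 := by ring
    _ ≤ (|log (C / m)| + K) / log 2 := by
        gcongr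
        exact mul_log_div_le hC hm hma hf hf_one.le

lemma card_le_Jcount {κ η f a b : ℝ} {c : ℂ} (hc : Df κ η f c ≠ 0)
    (hfin : (resonances κ η f a b).Finite) {S : Finset ℂ}
    (hS : (S : Set ℂ) ⊆ resonances κ η f a b) :
    S.card ≤ Jcount κ η f a b := by
  have hJ : Jcount κ η f a b = ∑ z ∈ hfin.toFinset, vanishingOrder (Df κ η f) z :=
    finsum_mem_eq_finite_toFinset_sum _ hfin
  rw [hJ, Finset.card_eq_sum_ones]
  calc ∑ _ ∈ S, 1 ≤ ∑ _ ∈ hfin.toFinset, 1 :=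
        Finset.sum_le_sum_of_subset (hfin.subset_toFinset.2 hS)
    _ ≤ _ := Finset.sum_le_sum fun z hz =>
        one_le_vanishingOrder (differentiable_Df κ η f) hc (hfin.mem_toFinset.1 hz).2.2.2

lemma exists_mul_Jcount_mem_Icc {κ η a b : ℝ} (hκ : 0 < κ) (hη : 0 < η) (ha : 0 < a)
    (hab : a < b) :
    ∃ c > 0, ∃ C : ℝ, ∃ f₀ > 0, ∀ f, 0 < f → f < f₀ → (resonances κ η f a b).Finite ∧
      f * Jcount κ η f a b ∈ Icc c C := by
  obtain ⟨c, hc, f₁, hf₁, hlow⟩ := exists_finset_subset_resonances hκ hη ha hab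
  obtain ⟨C, f₂, hf₂, hup⟩ := exists_mul_Jcount_le hκ hη ha hab.le
  refine ⟨c, hc, C, min f₁ f₂, by positivity, fun f hf hff₀ => ?_⟩
  rw [lt_min_iff] at hff₀
  obtain ⟨S, hS, hcard⟩ := hlow f hf hff₀.1
  obtain ⟨hne, hfin, hC⟩ := hup f hf hff₀.2
  refine ⟨hfin, hcard.trans ?_, hC⟩
  gcongr
  exact card_le_Jcount hne hfin hS

lemma liminf_limsup_ofReal_mul_natCast {J : ℝ → ℕ} {c C f₀ : ℝ} (hc : 0 < c) (hf₀ : 0 < f₀)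
    (hJ : ∀ f, 0 < f → f < f₀ → f * J f ∈ Icc c C) :
    0 < liminf (fun f : ℝ => ENNReal.ofReal f * (J f : ℝ≥0∞)) (𝓝[>] 0) ∧
      limsup (fun f : ℝ => ENNReal.ofReal f * (J f : ℝ≥0∞)) (𝓝[>] 0) < ⊤ := by
  have hev : ∀ᶠ f in 𝓝[>] (0 : ℝ),
      ENNReal.ofReal f * (J f : ℝ≥0∞) ∈ Icc (ENNReal.ofReal c) (ENNReal.ofReal C) := by
    filter_upwards [Ioo_mem_nhdsGT hf₀] with f ⟨hf, hff₀⟩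
    rw [← ENNReal.ofReal_natCast, ← ENNReal.ofReal_mul hf.le]
    exact ⟨ENNReal.ofReal_le_ofReal (hJ f hf hff₀).1, ENNReal.ofReal_le_ofReal (hJ f hf hff₀).2⟩
  exact ⟨(ENNReal.ofReal_pos.2 hc).trans_le (le_liminf_of_le (h := hev.mono fun _ h => h.1)),
    (limsup_le_of_le (h := hev.mono fun _ h => h.2)).trans_lt ENNReal.ofReal_lt_top⟩

end Airy

theorem stmt12_general (κ η a b : ℝ) (hκ : 0 < κ) (hη : 0 < η)
    (ha : 0 < a) (hab : a < b) :
    (∃ f₁ > (0 : ℝ), ∀ f : ℝ, 0 < f → f < f₁ →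
      {z : ℂ | a ≤ z.re ∧ z.re ≤ b ∧ z.im < 0 ∧ Df κ η f z = 0}.Finite) ∧
    0 < Filter.liminf (fun f : ℝ => ENNReal.ofReal f * (Jcount κ η f a b : ℝ≥0∞))
        (nhdsWithin 0 (Set.Ioi 0)) ∧
    Filter.liminf (fun f : ℝ => ENNReal.ofReal f * (Jcount κ η f a b : ℝ≥0∞))
        (nhdsWithin 0 (Set.Ioi 0)) ≤
      Filter.limsup (fun f : ℝ => ENNReal.ofReal f * (Jcount κ η f a b : ℝ≥0∞))
        (nhdsWithin 0 (Set.Ioi 0)) ∧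
    Filter.limsup (fun f : ℝ => ENNReal.ofReal f * (Jcount κ η f a b : ℝ≥0∞))
        (nhdsWithin 0 (Set.Ioi 0)) < ⊤ := by
  obtain ⟨c, hc, C, f₀, hf₀, h⟩ := exists_mul_Jcount_mem_Icc hκ hη ha hab
  obtain ⟨hlow, hup⟩ := liminf_limsup_ofReal_mul_natCast hc hf₀ fun f hf hff₀ => (h f hf hff₀).2
  exact ⟨⟨f₀, hf₀, fun f hf hff₀ => (h f hf hff₀).1⟩, hlow, Filter.liminf_le_limsup, hup⟩

/-- Resonance counting below a segment `[a, b]` with `0 < a < b/2`: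
`J(f)` is finite for small `f > 0`, and
`0 < liminf_{f→0⁺} f·J(f) ≤ limsup_{f→0⁺} f·J(f) < ∞`. -/
theorem stmt12 (κ η a b : ℝ) (hκ : 0 < κ) (hη : 0 < η)
    (ha : 0 < a) (hab : a < b / 2) :
    (∃ f₁ > (0 : ℝ), ∀ f : ℝ, 0 < f → f < f₁ →
      {z : ℂ | a ≤ z.re ∧ z.re ≤ b ∧ z.im < 0 ∧ Df κ η f z = 0}.Finite) ∧
    0 < Filter.liminf (fun f : ℝ => ENNReal.ofReal f * (Jcount κ η f a b : ℝ≥0∞))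
        (nhdsWithin 0 (Set.Ioi 0)) ∧
    Filter.liminf (fun f : ℝ => ENNReal.ofReal f * (Jcount κ η f a b : ℝ≥0∞))
        (nhdsWithin 0 (Set.Ioi 0)) ≤
      Filter.limsup (fun f : ℝ => ENNReal.ofReal f * (Jcount κ η f a b : ℝ≥0∞))
        (nhdsWithin 0 (Set.Ioi 0)) ∧
    Filter.limsup (fun f : ℝ => ENNReal.ofReal f * (Jcount κ η f a b : ℝ≥0∞))
        (nhdsWithin 0 (Set.Ioi 0)) < ⊤ :=
  stmt12_general κ η a b hκ hη ha (by linarith)
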